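/- arXiv:1009.0229 — 6 statements merged into one kernel-verified Lean document; each statement's English description precedes it below -/
import Mathlib

section
/- Let k ≥ 2 and l ≥ 1 be integers and let T = T_{k,l} be the operator described in the context. Then the dimension of the kernel of T equals 2 if l = 2^{k−1} − 1, and equals 1 otherwise. -/
/-!
The equations `Tζ = 0` can be solved by propagation along the edges. With `t = ζ(a_1)`, the
rows of `a` give `ζ(a_i) = 2^{i-1} t`, the rows of `b` make `ζ(b_i)` constant, equal to
`ζ(a_k) = 2^{k-1} t`, and the row of `a_1` then gives `ζ(ι) = (2^{k-1} - 1) t`. The rows of `c`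
give `ζ(c_i) = t`, so the rows of `d` give `ζ(d_i) = ζ(ι) - i t`. The only remaining constraint,
the row of `f`, reads `(2^{k-1} - 1 - l) t = 0`, and `ζ(f)` is unconstrained. Hence the kernel
is spanned by the basis vector of `f`, together with the solution `jSol` having `t = 1` exactly
when `l = 2^{k-1} - 1`.

The size parameters are written `k = m + 1` and `l = n + 1`, so that first, last, preceding and
following vertices become `0`, `Fin.last`, `Fin.castSucc` and `Fin.succ`. The rows of the
operator are computed in `row_a_zero`, …, `row_f`, and `mem_ker_iff` solves the system.
-/

/-- Vertices of the graph `j(k,l)`: the first `Unit` is the vertex `ι` (label I), the first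
`Fin k` lists `a_1,…,a_k`, the second `Fin k` lists `b_1,…,b_k`, the first `Fin l` lists
`c_1,…,c_l`, the second `Fin l` lists `d_1,…,d_l`, the last `Unit` is `f` (label F);
0-based indexing. -/
abbrev jVert (k l : ℕ) := Unit ⊕ Fin k ⊕ Fin k ⊕ Fin l ⊕ Fin l ⊕ Unit

/-- The matrix of the operator `T^{j(k,l)}`: row `v`, column `w` contains the coefficient
of `ζ(w)` in `(Tζ)(v)`.  Explicitly: `(Tζ)(ι) = 0`, `(Tζ)(a_1) = ζ(a_1) + ζ(ι) − ζ(b_1)`,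
`(Tζ)(a_{i+1}) = ζ(a_{i+1}) − 2ζ(a_i)`, `(Tζ)(b_i) = ζ(b_i) − ζ(b_{i+1})` for `i < k`,
`(Tζ)(b_k) = ζ(b_k) − ζ(a_k)`, `(Tζ)(c_1) = ζ(c_1) − ζ(a_1)`,
`(Tζ)(c_{i+1}) = ζ(c_{i+1}) − ζ(c_i)`, `(Tζ)(d_1) = ζ(d_1) + ζ(c_1) − ζ(ι)`,
`(Tζ)(d_{i+1}) = ζ(d_{i+1}) − ζ(d_i) + ζ(c_{i+1})`, `(Tζ)(f) = −ζ(d_l)`. -/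
def Tj (k l : ℕ) : Matrix (jVert k l) (jVert k l) ℂ :=
  Matrix.of fun v w =>
    match v, w with
    -- row ι : (Tζ)(ι) = 0
    | Sum.inl _, _ => 0
    -- rows a_i
    | Sum.inr (Sum.inl i), Sum.inl _ => if (i : ℕ) = 0 then 1 else 0
    | Sum.inr (Sum.inl i), Sum.inr (Sum.inl j) =>
        if i = j then 1 else if (i : ℕ) = (j : ℕ) + 1 then -2 else 0
    | Sum.inr (Sum.inl i), Sum.inr (Sum.inr (Sum.inl j)) =>
        if (i : ℕ) = 0 ∧ (j : ℕ) = 0 then -1 else 0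
    -- rows b_i
    | Sum.inr (Sum.inr (Sum.inl i)), Sum.inr (Sum.inl j) =>
        if (i : ℕ) = k - 1 ∧ (j : ℕ) = k - 1 then -1 else 0
    | Sum.inr (Sum.inr (Sum.inl i)), Sum.inr (Sum.inr (Sum.inl j)) =>
        if i = j then 1 else if (j : ℕ) = (i : ℕ) + 1 then -1 else 0
    -- rows c_i
    | Sum.inr (Sum.inr (Sum.inr (Sum.inl i))), Sum.inr (Sum.inl j) =>
        if (i : ℕ) = 0 ∧ (j : ℕ) = 0 then -1 else 0
    | Sum.inr (Sum.inr (Sum.inr (Sum.inl i))), Sum.inr (Sum.inr (Sum.inr (Sum.inl j))) =>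
        if i = j then 1 else if (i : ℕ) = (j : ℕ) + 1 then -1 else 0
    -- rows d_i
    | Sum.inr (Sum.inr (Sum.inr (Sum.inr (Sum.inl i)))), Sum.inl _ =>
        if (i : ℕ) = 0 then -1 else 0
    | Sum.inr (Sum.inr (Sum.inr (Sum.inr (Sum.inl i)))), Sum.inr (Sum.inr (Sum.inr (Sum.inl j))) =>
        if i = j then 1 else 0
    | Sum.inr (Sum.inr (Sum.inr (Sum.inr (Sum.inl i)))), Sum.inr (Sum.inr (Sum.inr (Sum.inr (Sum.inl j)))) =>
        if i = j then 1 else if (i : ℕ) = (j : ℕ) + 1 then -1 else 0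
    -- row f
    | Sum.inr (Sum.inr (Sum.inr (Sum.inr (Sum.inr _)))), Sum.inr (Sum.inr (Sum.inr (Sum.inr (Sum.inl j)))) =>
        if (j : ℕ) = l - 1 then -1 else 0
    | _, _ => 0

section Rows

variable {m n : ℕ} (ζ : jVert (m + 1) (n + 1) → ℂ)

lemma row_ι : (Tj (m + 1) (n + 1)).mulVec ζ (.inl ()) = 0 := by
  simp [Matrix.mulVec, dotProduct, Tj]

lemma row_a_zero : (Tj (m + 1) (n + 1)).mulVec ζ (.inr (.inl 0)) =
    ζ (.inr (.inl 0)) + ζ (.inl ()) - ζ (.inr (.inr (.inl 0))) := by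
  simp [Matrix.mulVec, dotProduct, Tj, Fintype.sum_sum_type]
  ring

lemma row_a_succ (i : Fin m) : (Tj (m + 1) (n + 1)).mulVec ζ (.inr (.inl i.succ)) =
    ζ (.inr (.inl i.succ)) - 2 * ζ (.inr (.inl i.castSucc)) := by
  -- A bidiagonal row is split into two single-entry rows, whose sums `simp` evaluates; the
  -- other two-term rows below are treated alike.
  have h : ∀ j : Fin (m + 1), (if i.succ = j then (1 : ℂ) else
      if (i : ℕ) = j then -2 else 0) * ζ (.inr (.inl j)) =
      (if i.succ = j then ζ (.inr (.inl j)) else 0) +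
        (if i.castSucc = j then -2 * ζ (.inr (.inl j)) else 0) := by
    intro j
    simp only [Fin.ext_iff, Fin.val_succ, Fin.val_castSucc]
    split_ifs <;> first | omega | ring
  simp [Matrix.mulVec, dotProduct, Tj, Fintype.sum_sum_type, h, Finset.sum_add_distrib]
  ring

lemma row_b_castSucc (i : Fin m) :
    (Tj (m + 1) (n + 1)).mulVec ζ (.inr (.inr (.inl i.castSucc))) =
    ζ (.inr (.inr (.inl i.castSucc))) - ζ (.inr (.inr (.inl i.succ))) := by
  have h : ∀ j : Fin (m + 1), (if i.castSucc = j then (1 : ℂ) else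
      if (j : ℕ) = i + 1 then -1 else 0) * ζ (.inr (.inr (.inl j))) =
      (if i.castSucc = j then ζ (.inr (.inr (.inl j))) else 0) +
        (if i.succ = j then - ζ (.inr (.inr (.inl j))) else 0) := by
    intro j
    simp only [Fin.ext_iff, Fin.val_succ, Fin.val_castSucc]
    split_ifs <;> first | omega | ring
  have hi : (i : ℕ) ≠ m := i.2.ne
  simp [Matrix.mulVec, dotProduct, Tj, Fintype.sum_sum_type, h, hi, Finset.sum_add_distrib]
  ring

lemma row_b_last :
    (Tj (m + 1) (n + 1)).mulVec ζ (.inr (.inr (.inl (Fin.last m)))) =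
    ζ (.inr (.inr (.inl (Fin.last m)))) - ζ (.inr (.inl (Fin.last m))) := by
  have h : ∀ j : Fin (m + 1), (if Fin.last m = j then (1 : ℂ) else
      if (j : ℕ) = m + 1 then -1 else 0) * ζ (.inr (.inr (.inl j))) =
      (if Fin.last m = j then ζ (.inr (.inr (.inl j))) else 0) := by
    intro j
    have : (j : ℕ) ≠ m + 1 := j.2.ne
    simp [this]
  have h' : ∀ j : Fin (m + 1), ((j : ℕ) = m) ↔ Fin.last m = j := by
    intro j
    simp [Fin.ext_iff, eq_comm]
  simp [Matrix.mulVec, dotProduct, Tj, Fintype.sum_sum_type, h]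
  simp [h']
  ring

lemma row_c_zero : (Tj (m + 1) (n + 1)).mulVec ζ (.inr (.inr (.inr (.inl 0)))) =
    ζ (.inr (.inr (.inr (.inl 0)))) - ζ (.inr (.inl 0)) := by
  simp [Matrix.mulVec, dotProduct, Tj, Fintype.sum_sum_type]
  ring

lemma row_c_succ (i : Fin n) :
    (Tj (m + 1) (n + 1)).mulVec ζ (.inr (.inr (.inr (.inl i.succ)))) =
    ζ (.inr (.inr (.inr (.inl i.succ)))) - ζ (.inr (.inr (.inr (.inl i.castSucc)))) := by
  have h : ∀ j : Fin (n + 1), (if i.succ = j then (1 : ℂ) else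
      if (i : ℕ) = j then -1 else 0) * ζ (.inr (.inr (.inr (.inl j)))) =
      (if i.succ = j then ζ (.inr (.inr (.inr (.inl j)))) else 0) +
        (if i.castSucc = j then - ζ (.inr (.inr (.inr (.inl j)))) else 0) := by
    intro j
    simp only [Fin.ext_iff, Fin.val_succ, Fin.val_castSucc]
    split_ifs <;> first | omega | ring
  simp [Matrix.mulVec, dotProduct, Tj, Fintype.sum_sum_type, h, Finset.sum_add_distrib]
  ring

lemma row_d_zero : (Tj (m + 1) (n + 1)).mulVec ζ (.inr (.inr (.inr (.inr (.inl 0))))) =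
    ζ (.inr (.inr (.inr (.inr (.inl 0))))) + ζ (.inr (.inr (.inr (.inl 0)))) - ζ (.inl ()) := by
  simp [Matrix.mulVec, dotProduct, Tj, Fintype.sum_sum_type]
  ring

lemma row_d_succ (i : Fin n) :
    (Tj (m + 1) (n + 1)).mulVec ζ (.inr (.inr (.inr (.inr (.inl i.succ))))) =
    ζ (.inr (.inr (.inr (.inr (.inl i.succ))))) - ζ (.inr (.inr (.inr (.inr (.inl i.castSucc)))))
      + ζ (.inr (.inr (.inr (.inl i.succ)))) := by
  have h : ∀ j : Fin (n + 1), (if i.succ = j then (1 : ℂ) else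
      if (i : ℕ) = j then -1 else 0) * ζ (.inr (.inr (.inr (.inr (.inl j))))) =
      (if i.succ = j then ζ (.inr (.inr (.inr (.inr (.inl j))))) else 0) +
        (if i.castSucc = j then - ζ (.inr (.inr (.inr (.inr (.inl j))))) else 0) := by
    intro j
    simp only [Fin.ext_iff, Fin.val_succ, Fin.val_castSucc]
    split_ifs <;> first | omega | ring
  simp [Matrix.mulVec, dotProduct, Tj, Fintype.sum_sum_type, h, Finset.sum_add_distrib]
  ring

lemma row_f : (Tj (m + 1) (n + 1)).mulVec ζ (.inr (.inr (.inr (.inr (.inr ()))))) =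
    - ζ (.inr (.inr (.inr (.inr (.inl (Fin.last n)))))) := by
  have h' : ∀ j : Fin (n + 1), ((j : ℕ) = n) ↔ Fin.last n = j := by
    intro j
    simp [Fin.ext_iff, eq_comm]
  simp [Matrix.mulVec, dotProduct, Tj, Fintype.sum_sum_type]
  simp [h']

end Rows

/-- The vector with value `t` at `a_1` and `φ` at `f` that satisfies every equation of `Tζ = 0`
except possibly the one of row `f`. Indices are 0-based, hence `d_{i+1}` carries
`(2^{k-1} - 1) t - (i + 1) t`. -/
def jSol (m n : ℕ) (t φ : ℂ) : jVert (m + 1) (n + 1) → ℂ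
  | .inl _ => (2 ^ m - 1) * t
  | .inr (.inl i) => 2 ^ (i : ℕ) * t
  | .inr (.inr (.inl _)) => 2 ^ m * t
  | .inr (.inr (.inr (.inl _))) => t
  | .inr (.inr (.inr (.inr (.inl i)))) => (2 ^ m - 1 - ((i : ℕ) + 1)) * t
  | .inr (.inr (.inr (.inr (.inr _)))) => φ

/-- The kernel consists of the vectors `jSol m n t φ` whose parameter `t` satisfies the
constraint coming from row `f`. -/
lemma mem_ker_iff {m n : ℕ} (ζ : jVert (m + 1) (n + 1) → ℂ) :
    ζ ∈ LinearMap.ker (Matrix.mulVecLin (Tj (m + 1) (n + 1))) ↔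
      ∃ t φ : ℂ, (2 ^ m - 1 - ((n : ℂ) + 1)) * t = 0 ∧ ζ = jSol m n t φ := by
  rw [LinearMap.mem_ker, Matrix.mulVecLin_apply]
  constructor
  · intro h
    have ha0 := row_a_zero ζ
    have ha := row_a_succ ζ
    have hb := row_b_castSucc ζ
    have hbl := row_b_last ζ
    have hc0 := row_c_zero ζ
    have hc := row_c_succ ζ
    have hd0 := row_d_zero ζ
    have hd := row_d_succ ζ
    have hf := row_f ζ
    simp only [h, Pi.zero_apply] at ha0 ha hb hbl hc0 hc hd0 hd hf
    have ea : ∀ i : Fin (m + 1), ζ (.inr (.inl i)) = 2 ^ (i : ℕ) * ζ (.inr (.inl 0)) := by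
      intro i
      induction i using Fin.induction with
      | zero => simp
      | succ i ih =>
        rw [Fin.val_castSucc] at ih
        rw [Fin.val_succ, pow_succ]
        linear_combination 2 * ih - ha i
    have eb : ∀ i : Fin (m + 1), ζ (.inr (.inr (.inl i))) = 2 ^ m * ζ (.inr (.inl 0)) := by
      intro i
      induction i using Fin.reverseInduction with
      | last =>
        have := ea (Fin.last m)
        rw [Fin.val_last] at this
        linear_combination this - hbl
      | cast i ih => linear_combination ih - hb i
    have eι : ζ (.inl ()) = (2 ^ m - 1) * ζ (.inr (.inl 0)) := by
      linear_combination eb 0 - ha0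
    have ec : ∀ i : Fin (n + 1), ζ (.inr (.inr (.inr (.inl i)))) = ζ (.inr (.inl 0)) := by
      intro i
      induction i using Fin.induction with
      | zero => linear_combination -hc0
      | succ i ih => linear_combination ih - hc i
    have ed : ∀ i : Fin (n + 1), ζ (.inr (.inr (.inr (.inr (.inl i))))) =
        (2 ^ m - 1 - ((i : ℕ) + 1)) * ζ (.inr (.inl 0)) := by
      intro i
      induction i using Fin.induction with
      | zero =>
        simp only [Fin.val_zero, Nat.cast_zero]
        linear_combination -hd0 - ec 0 + eι
      | succ i ih =>
        rw [Fin.val_castSucc] at ih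
        rw [Fin.val_succ]
        push_cast
        linear_combination ih - hd i - ec i.succ
    refine ⟨ζ (.inr (.inl 0)), ζ (.inr (.inr (.inr (.inr (.inr ()))))), ?_, ?_⟩
    · have := ed (Fin.last n)
      rw [Fin.val_last] at this
      linear_combination hf - this
    · funext v
      rcases v with _ | i | i | i | i | _
      exacts [eι, ea i, eb i, ec i, ed i, rfl]
  · rintro ⟨t, φ, h, rfl⟩
    funext v
    rw [Pi.zero_apply]
    rcases v with _ | i | i | i | i | _
    · exact row_ι _
    · cases i using Fin.cases with
      | zero => rw [row_a_zero]; simp only [jSol, Fin.val_zero]; ring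
      | succ i => rw [row_a_succ]; simp only [jSol, Fin.val_succ, Fin.val_castSucc]; ring
    · cases i using Fin.lastCases with
      | last => rw [row_b_last]; simp only [jSol, Fin.val_last]; ring
      | cast i => rw [row_b_castSucc]; simp only [jSol]; ring
    · cases i using Fin.cases with
      | zero => rw [row_c_zero]; simp only [jSol, Fin.val_zero]; ring
      | succ i => rw [row_c_succ]; simp only [jSol]; ring
    · cases i using Fin.cases with
      | zero => rw [row_d_zero]; simp only [jSol, Fin.val_zero]; push_cast; ring
      | succ i =>
        rw [row_d_succ]; simp only [jSol, Fin.val_succ, Fin.val_castSucc]; push_cast; ring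
    · rw [row_f]; simp only [jSol, Fin.val_last]; linear_combination -h

lemma jSol_eq (m n : ℕ) (t φ : ℂ) :
    jSol m n t φ = t • jSol m n 1 0 + φ • jSol m n 0 1 := by
  funext v
  rcases v with _ | i | i | i | i | _ <;> simp [jSol] <;> ring

lemma jSol_inj {m n : ℕ} {t φ : ℂ} (h : jSol m n t φ = 0) : t = 0 ∧ φ = 0 :=
  ⟨by simpa [jSol] using congrFun h (.inr (.inl 0)),
    by simpa [jSol] using congrFun h (.inr (.inr (.inr (.inr (.inr ())))))⟩

/-- For `k ≥ 2` and `l ≥ 1`, the dimension of the kernel of `T^{j(k,l)}`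
equals `2` if `l = 2^{k−1} − 1` and equals `1` otherwise. -/
theorem stmt_2 (k l : ℕ) (hk : 2 ≤ k) (hl : 1 ≤ l) :
    Module.finrank ℂ (LinearMap.ker (Matrix.mulVecLin (Tj k l))) =
      if l = 2 ^ (k - 1) - 1 then 2 else 1 := by
  obtain ⟨m, rfl⟩ : ∃ m, k = m + 1 := ⟨k - 1, by omega⟩
  obtain ⟨n, rfl⟩ : ∃ n, l = n + 1 := ⟨l - 1, by omega⟩
  rw [Nat.add_sub_cancel]
  -- The truncated subtraction is harmless since `2 ^ m ≥ 1`.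
  have hcoef : (2 ^ m - 1 - ((n : ℂ) + 1)) = 0 ↔ n + 1 = 2 ^ m - 1 := by
    have hpos : 1 ≤ 2 ^ m := Nat.one_le_two_pow
    rw [sub_eq_zero, eq_comm, ← Nat.cast_inj (R := ℂ), Nat.cast_sub hpos]
    push_cast
    rfl
  split_ifs with hln
  · have hker : LinearMap.ker (Matrix.mulVecLin (Tj (m + 1) (n + 1))) =
        Submodule.span ℂ (Set.range ![jSol m n 1 0, jSol m n 0 1]) := by
      ext ζ
      simp only [mem_ker_iff, hcoef.2 hln, zero_mul, true_and, Matrix.range_cons,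
        Matrix.range_empty, Set.union_empty, Set.singleton_union, Submodule.mem_span_pair]
      refine exists₂_congr fun t φ => ?_
      rw [jSol_eq, eq_comm]
    have hli : LinearIndependent ℂ ![jSol m n 1 0, jSol m n 0 1] := by
      rw [LinearIndependent.pair_iff]
      intro s t hst
      rw [← jSol_eq] at hst
      exact jSol_inj hst
    rw [hker, finrank_span_eq_card hli, Fintype.card_fin]
  · have hker : LinearMap.ker (Matrix.mulVecLin (Tj (m + 1) (n + 1))) =
        Submodule.span ℂ {jSol m n 0 1} := by
      ext ζ
      simp only [mem_ker_iff, mul_eq_zero, hcoef, hln, false_or, exists_and_left,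
        exists_eq_left, Submodule.mem_span_singleton]
      refine exists_congr fun φ => ?_
      rw [jSol_eq, zero_smul, zero_add, eq_comm]
    rw [hker, finrank_span_singleton]
    intro h
    exact one_ne_zero (jSol_inj h).2
end

section
/- Let k ≥ 2 and l ≥ 1 be integers and let T = T_{k,l} be the operator described in the context. If ζ satisfies Tζ = 0, ζ(f) = 0 and ζ(a_1) = 0, then ζ = 0. -/
/-!
Every equation of `Tζ = 0` propagates a value along one of the chains `a`, `b`, `c`, `d`.
From `ζ(a_1) = 0` the recursions `a_{i+1} = 2 a_i` and `c_{i+1} = c_i`, `c_1 = a_1` give `a = c = 0`.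
The chain `b` is constant with last value `ζ(a_k) = 0`, so `b = 0`, and then the equation at `a_1`
yields `ζ(ι) = 0`. Finally `d_1 = ζ(ι) - c_1 = 0`, and `d` is constant because `c = 0`.
-/

/-- Let `k ≥ 2`, `l ≥ 1` and let `T = T_{k,l}` be the operator
`T^{j(k,l)}`.  The coordinates of a vector `ζ` are `ζι = ζ(ι)`, `ζa i = ζ(a_{i+1})`,
`ζb i = ζ(b_{i+1})`, `ζc i = ζ(c_{i+1})`, `ζd i = ζ(d_{i+1})` (0-based) and `ζf = ζ(f)`.
The hypotheses `ha1`–`hf` say exactly that `Tζ = 0` (the coordinate `(Tζ)(ι) = 0`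
identically, giving no equation).  If moreover `ζ(f) = 0` and `ζ(a_1) = 0`, then `ζ = 0`. -/
theorem stmt_3 (k l : ℕ) (hk : 2 ≤ k) (hl : 1 ≤ l)
    (ζι : ℂ) (ζa ζb : Fin k → ℂ) (ζc ζd : Fin l → ℂ) (ζf : ℂ)
    (ha1 : ζa ⟨0, by omega⟩ + ζι - ζb ⟨0, by omega⟩ = 0)
    (ha : ∀ (i : ℕ) (hi : i + 1 < k), ζa ⟨i + 1, hi⟩ - 2 * ζa ⟨i, by omega⟩ = 0)
    (hb : ∀ (i : ℕ) (hi : i + 1 < k), ζb ⟨i, by omega⟩ - ζb ⟨i + 1, hi⟩ = 0)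
    (hbk : ζb ⟨k - 1, by omega⟩ - ζa ⟨k - 1, by omega⟩ = 0)
    (hc1 : ζc ⟨0, by omega⟩ - ζa ⟨0, by omega⟩ = 0)
    (hc : ∀ (i : ℕ) (hi : i + 1 < l), ζc ⟨i + 1, hi⟩ - ζc ⟨i, by omega⟩ = 0)
    (hd1 : ζd ⟨0, by omega⟩ + ζc ⟨0, by omega⟩ - ζι = 0)
    (hd : ∀ (i : ℕ) (hi : i + 1 < l), ζd ⟨i + 1, hi⟩ - ζd ⟨i, by omega⟩ + ζc ⟨i + 1, hi⟩ = 0)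
    (hf : -ζd ⟨l - 1, by omega⟩ = 0)
    (hζf : ζf = 0) (hζa1 : ζa ⟨0, by omega⟩ = 0) :
    ζι = 0 ∧ ζa = 0 ∧ ζb = 0 ∧ ζc = 0 ∧ ζd = 0 ∧ ζf = 0 := by
  have a0 : ∀ (i : ℕ) (hi : i < k), ζa ⟨i, hi⟩ = 0 := by
    intro i
    induction i with
    | zero => exact fun _ => hζa1
    | succ n ih =>
      intro hi
      linear_combination ha n hi + 2 * ih (by omega)
  have c0 : ∀ (i : ℕ) (hi : i < l), ζc ⟨i, hi⟩ = 0 := by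
    intro i
    induction i with
    | zero => exact fun _ => by linear_combination hc1 + hζa1
    | succ n ih =>
      intro hi
      linear_combination hc n hi + ih (by omega)
  have b_const : ∀ (i : ℕ) (hi : i < k), ζb ⟨i, hi⟩ = ζb ⟨0, by omega⟩ := by
    intro i
    induction i with
    | zero => exact fun _ => rfl
    | succ n ih =>
      intro hi
      linear_combination ih (by omega) - hb n hi
  have b_first : ζb ⟨0, by omega⟩ = 0 := by
    linear_combination hbk + a0 (k - 1) (by omega) - b_const (k - 1) (by omega)
  have ι0 : ζι = 0 := by linear_combination ha1 + b_first - hζa1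
  have d0 : ∀ (i : ℕ) (hi : i < l), ζd ⟨i, hi⟩ = 0 := by
    intro i
    induction i with
    | zero => exact fun _ => by linear_combination hd1 + ι0 - c0 0 (by omega)
    | succ n ih =>
      intro hi
      linear_combination hd n hi + ih (by omega) - c0 (n + 1) hi
  exact ⟨ι0, funext fun i => a0 i i.2, funext fun i => (b_const i i.2).trans b_first,
    funext fun i => c0 i i.2, funext fun i => d0 i i.2, hζf⟩
end

section
/- Let k ≥ 2 and l ≥ 1 be integers and let T = T_{k,l} be the operator described in the context. If ζ satisfies Tζ = 0 and ζ(a_1) = 1, then necessarily l = 2^{k−1} − 1; moreover such a ζ satisfies ζ(a_i) = 2^{i−1}, ζ(b_i) = 2^{k−1}, ζ(ι) = 2^{k−1} − 1, ζ(c_i) = 1, and ζ(d_i) = 2^{k−1} − 1 − i for all admissible indices i. -/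
/-! The kernel equations are first-order recurrences along the four chains of symbols, so `ζ` is
determined by `ζ(a_1) = 1`: the `a`-chain doubles, the `b`-chain is constant and equal to the last
`a`-value `2^(k-1)`, the equation at `a_1` then gives `ζ(ι)`, the `c`-chain is constantly `1`, and
the `d`-chain starts at `ζ(ι) - 1` and decreases by `1` at each step.  The equation at `f` forces
the last `d`-value `2^(k-1) - 1 - l` to vanish, which determines `l`. -/

/-- Let `k ≥ 2`, `l ≥ 1` and let `T = T_{k,l}` be the operator
`T^{j(k,l)}`.  The coordinates of a vector `ζ` are `ζι = ζ(ι)`, `ζa i = ζ(a_{i+1})`,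
`ζb i = ζ(b_{i+1})`, `ζc i = ζ(c_{i+1})`, `ζd i = ζ(d_{i+1})` (0-based) and `ζf = ζ(f)`.
The hypotheses `ha1`–`hf` say exactly that `Tζ = 0`.  If `ζ(a_1) = 1` then necessarily
`l = 2^{k−1} − 1`, and moreover `ζ(a_i) = 2^{i−1}`, `ζ(b_i) = 2^{k−1}`,
`ζ(ι) = 2^{k−1} − 1`, `ζ(c_i) = 1` and `ζ(d_i) = 2^{k−1} − 1 − i` for all admissible `i`
(1-based; with our 0-based indices, `ζa i = 2^i`, `ζd i = 2^{k−1} − 1 − (i+1)`). -/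
theorem stmt_4 (k l : ℕ) (hk : 2 ≤ k) (hl : 1 ≤ l)
    (ζι : ℂ) (ζa ζb : Fin k → ℂ) (ζc ζd : Fin l → ℂ) (ζf : ℂ)
    (ha1 : ζa ⟨0, by omega⟩ + ζι - ζb ⟨0, by omega⟩ = 0)
    (ha : ∀ (i : ℕ) (hi : i + 1 < k), ζa ⟨i + 1, hi⟩ - 2 * ζa ⟨i, by omega⟩ = 0)
    (hb : ∀ (i : ℕ) (hi : i + 1 < k), ζb ⟨i, by omega⟩ - ζb ⟨i + 1, hi⟩ = 0)
    (hbk : ζb ⟨k - 1, by omega⟩ - ζa ⟨k - 1, by omega⟩ = 0)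
    (hc1 : ζc ⟨0, by omega⟩ - ζa ⟨0, by omega⟩ = 0)
    (hc : ∀ (i : ℕ) (hi : i + 1 < l), ζc ⟨i + 1, hi⟩ - ζc ⟨i, by omega⟩ = 0)
    (hd1 : ζd ⟨0, by omega⟩ + ζc ⟨0, by omega⟩ - ζι = 0)
    (hd : ∀ (i : ℕ) (hi : i + 1 < l), ζd ⟨i + 1, hi⟩ - ζd ⟨i, by omega⟩ + ζc ⟨i + 1, hi⟩ = 0)
    (hf : -ζd ⟨l - 1, by omega⟩ = 0)
    (hζa1 : ζa ⟨0, by omega⟩ = 1) :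
    l = 2 ^ (k - 1) - 1 ∧
    (∀ i : Fin k, ζa i = 2 ^ (i : ℕ)) ∧
    (∀ i : Fin k, ζb i = 2 ^ (k - 1)) ∧
    ζι = 2 ^ (k - 1) - 1 ∧
    (∀ i : Fin l, ζc i = 1) ∧
    (∀ i : Fin l, ζd i = 2 ^ (k - 1) - 1 - ((i : ℕ) + 1)) := by
  have hA : ∀ (i : ℕ) (hi : i < k), ζa ⟨i, hi⟩ = 2 ^ i := by
    intro i
    induction i with
    | zero => intro _; simpa using hζa1
    | succ n ih =>
      intro hi
      have h := ih (by omega)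
      linear_combination ha n hi + 2 * h
  have hB0 : ∀ (i : ℕ) (hi : i < k), ζb ⟨i, hi⟩ = ζb ⟨0, by omega⟩ := by
    intro i
    induction i with
    | zero => intro _; rfl
    | succ n ih =>
      intro hi
      have h := ih (by omega)
      linear_combination h - hb n hi
  have hb0 : ζb ⟨0, by omega⟩ = 2 ^ (k - 1) := by
    linear_combination hbk + hA (k - 1) (by omega) - hB0 (k - 1) (by omega)
  have hι : ζι = 2 ^ (k - 1) - 1 := by
    linear_combination ha1 + hb0 - hζa1
  have hC : ∀ (i : ℕ) (hi : i < l), ζc ⟨i, hi⟩ = 1 := by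
    intro i
    induction i with
    | zero => intro _; linear_combination hc1 + hζa1
    | succ n ih =>
      intro hi
      have h := ih (by omega)
      linear_combination h + hc n hi
  have hD : ∀ (i : ℕ) (hi : i < l), ζd ⟨i, hi⟩ = 2 ^ (k - 1) - 1 - ((i : ℂ) + 1) := by
    intro i
    induction i with
    | zero =>
      intro h0
      push_cast
      linear_combination hd1 + hι - hC 0 h0
    | succ n ih =>
      intro hi
      have h := ih (by omega)
      push_cast
      linear_combination h + hd n hi - hC (n + 1) hi
  have hl' : l = 2 ^ (k - 1) - 1 := by
    have h := hD (l - 1) (by omega)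
    rw [Nat.cast_sub hl] at h
    push_cast at h
    -- Adding `1` avoids the truncated subtraction when passing from `ℂ` to `ℕ`.
    have h2 : ((l + 1 : ℕ) : ℂ) = ((2 ^ (k - 1) : ℕ) : ℂ) := by
      push_cast
      linear_combination hf + h
    have h3 : l + 1 = 2 ^ (k - 1) := Nat.cast_injective h2
    omega
  exact ⟨hl', fun i => hA i i.2, fun i => (hB0 i i.2).trans hb0, hι, fun i => hC i i.2,
    fun i => hD i i.2⟩
end

section
/- Let p ≥ 2 be an integer and set α = 1/p and β = (p−1)/p. Then (1/8)·(2 + 5α + α³ + 2βα² + β + β²) + Σ_{k=1}^∞ 2k·(1/8)·α³·β^k + Σ_{l=1}^∞ (2l+1)·(1/8)·α³·β^l + Σ_{k=1}^∞ Σ_{l=1}^∞ (2k+2l+2)·(1/8)·α³·β^{k+l} = 1 (all the series converge absolutely). -/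
/-! Since `1 - β = α`, the arithmetic-geometric series `∑_{k≥1} (a k + b) β^k` has sum
`a β / α² + b β / α`. Applied to the two single series, it gives `2αβ/8` and `(2αβ + α²β)/8`.
Applied first in `l` and then in `k`, it gives `(4β² + 2αβ²)/8` for the double series. Adding the
remaining summand and substituting `α = 1 - β` leaves a polynomial identity. -/

theorem hasSum_of_eq {f g : ℕ → ℝ} {a b : ℝ} (h : HasSum f a) (hfg : ∀ n, g n = f n)
    (hab : b = a) : HasSum g b := by
  rwa [funext hfg, hab]

theorem hasSum_arith_geom {β : ℝ} (h0 : 0 ≤ β) (h1 : β < 1) (a b : ℝ) :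
    HasSum (fun n : ℕ => (a * ((n : ℝ) + 1) + b) * β ^ (n + 1))
      (a * β / (1 - β) ^ 2 + b * β / (1 - β)) := by
  have hn : ‖β‖ < 1 := by rwa [Real.norm_of_nonneg h0]
  have h := ((hasSum_coe_mul_geometric_of_norm_lt_one hn).mul_left (a * β)).add
    ((hasSum_geometric_of_lt_one h0 h1).mul_left ((a + b) * β))
  have hne : 1 - β ≠ 0 := by linarith
  refine hasSum_of_eq h (fun _ => by ring) ?_
  field_simp
  ring


/-- Let `p ≥ 2`, `α = 1/p`, `β = (p−1)/p`.  Then all the series below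
converge absolutely (for real series with nonnegative terms this is `Summable`) and
`(1/8)(2 + 5α + α³ + 2βα² + β + β²) + Σ_{k≥1} 2k·(1/8)·α³·β^k
  + Σ_{l≥1} (2l+1)·(1/8)·α³·β^l + Σ_{k,l≥1} (2k+2l+2)·(1/8)·α³·β^{k+l} = 1`.
The sums over `k ≥ 1` are written as `tsum`s over `k : ℕ` of the terms at `k + 1`. -/
theorem stmt_6 (p : ℕ) (hp : 2 ≤ p) (α β : ℝ)
    (hα : α = 1 / p) (hβ : β = ((p : ℝ) - 1) / p) :
    Summable (fun k : ℕ => 2 * ((k : ℝ) + 1) * (1 / 8) * α ^ 3 * β ^ (k + 1)) ∧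
    Summable (fun l : ℕ => (2 * ((l : ℝ) + 1) + 1) * (1 / 8) * α ^ 3 * β ^ (l + 1)) ∧
    (∀ k : ℕ, Summable (fun l : ℕ =>
      (2 * ((k : ℝ) + 1) + 2 * ((l : ℝ) + 1) + 2) * (1 / 8) * α ^ 3 * β ^ ((k + 1) + (l + 1)))) ∧
    Summable (fun k : ℕ => ∑' l : ℕ,
      (2 * ((k : ℝ) + 1) + 2 * ((l : ℝ) + 1) + 2) * (1 / 8) * α ^ 3 * β ^ ((k + 1) + (l + 1))) ∧
    (1 / 8) * (2 + 5 * α + α ^ 3 + 2 * β * α ^ 2 + β + β ^ 2)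
      + (∑' k : ℕ, 2 * ((k : ℝ) + 1) * (1 / 8) * α ^ 3 * β ^ (k + 1))
      + (∑' l : ℕ, (2 * ((l : ℝ) + 1) + 1) * (1 / 8) * α ^ 3 * β ^ (l + 1))
      + (∑' k : ℕ, ∑' l : ℕ,
          (2 * ((k : ℝ) + 1) + 2 * ((l : ℝ) + 1) + 2) * (1 / 8) * α ^ 3 * β ^ ((k + 1) + (l + 1)))
      = 1 := by
  have hp0 : (0 : ℝ) < p := by exact_mod_cast (by omega : 0 < p)
  have hp1 : (1 : ℝ) ≤ p := by exact_mod_cast (by omega : 1 ≤ p)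
  have hα0 : 0 < α := by rw [hα]; positivity
  have hβα : 1 - β = α := by rw [hα, hβ]; field_simp; ring
  have hβ0 : 0 ≤ β := by rw [hβ]; exact div_nonneg (by linarith) hp0.le
  have key := hasSum_arith_geom hβ0 (by linarith)
  rw [hβα] at key
  have hk : HasSum (fun k : ℕ => 2 * ((k : ℝ) + 1) * (1 / 8) * α ^ 3 * β ^ (k + 1))
      (2 * α * β / 8) := by
    refine hasSum_of_eq ((key 2 0).mul_left (α ^ 3 / 8)) (fun _ => by ring) ?_
    field_simp
    ring
  have hl : HasSum (fun l : ℕ => (2 * ((l : ℝ) + 1) + 1) * (1 / 8) * α ^ 3 * β ^ (l + 1))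
      ((2 * α * β + α ^ 2 * β) / 8) := by
    refine hasSum_of_eq ((key 2 1).mul_left (α ^ 3 / 8)) (fun _ => by ring) ?_
    field_simp
  have hin : ∀ k : ℕ, HasSum (fun l : ℕ =>
      (2 * ((k : ℝ) + 1) + 2 * ((l : ℝ) + 1) + 2) * (1 / 8) * α ^ 3 * β ^ ((k + 1) + (l + 1)))
      ((2 * α ^ 2 * β / 8 * ((k : ℝ) + 1) + (2 * α * β + 2 * α ^ 2 * β) / 8) * β ^ (k + 1)) := by
    intro k
    refine hasSum_of_eq ((key 2 (2 * ((k : ℝ) + 1) + 2)).mul_left (α ^ 3 / 8 * β ^ (k + 1))) (fun _ => by ring) ?_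
    field_simp
    ring
  have hout := key (2 * α ^ 2 * β / 8) ((2 * α * β + 2 * α ^ 2 * β) / 8)
  have htsum := funext fun k => (hin k).tsum_eq
  refine ⟨hk.summable, hl.summable, fun k => (hin k).summable, ?_, ?_⟩
  · rw [htsum]
    exact hout.summable
  · rw [htsum, hk.tsum_eq, hl.tsum_eq, hout.tsum_eq]
    have hβ' : β = 1 - α := by linarith
    subst hβ'
    field_simp
    ring
end

section
/- For every integer p ≥ 2, the real number Σ_{k=1}^∞ ((p−1)/p)^{k + 2^{k−1}} is transcendental (over ℚ). -/
/-!
Put `a = (p - 1) / p` and `F(z) = ∑ₖ aᵏ z^(2ᵏ)`, so that the series in question is `a F(a)`. The proof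
is Mahler's method, based on the functional equation `F(z) = z + a F(z²)`.

* The function `F` is transcendental over `ℚ(z)` (`no_relation`).
* For each `N`, there is a nonzero polynomial `P(X, Y)` of partial degrees at most `N` for which
  `E(z) = P(z, F(z))` vanishes to order at least `N²` at `0` (`exists_aux`). Since `E` is analytic and
  not identically zero, `E(a^(2ᵏ)) ≠ 0` for large `k`, and `|E(a^(2ᵏ))| ≤ D a^(N² 2ᵏ)`.
* Iterating the functional equation, `F(a^(2ᵏ)) = a⁻ᵏ (θ - tₖ)` with `θ = F(a)` and `tₖ` rational. If
  `θ` were algebraic, then `E(a^(2ᵏ))` would be a nonzero element of `ℚ(θ)` whose denominator and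
  conjugates are at most `p^(c N 2ᵏ)` up to factors independent of `k`, with `c` independent of `N`
  and `k`. As the norm of a nonzero algebraic integer is at least `1` in absolute value (`liouville`),
  this gives `C |E(a^(2ᵏ))| p^(b N 2ᵏ) ≥ 1`.

For `N` large enough and `k → ∞`, the two bounds on `|E(a^(2ᵏ))|` contradict each other.
-/

section
open Polynomial Filter Topology Asymptotics

namespace Mahler

/-- The Mahler function `F a z = ∑ₖ aᵏ z^(2ᵏ)`. For `0 < a < 1` the series converges on the closed
unit disc and `F a` is analytic inside it. -/
noncomputable def F (a : ℚ) (z : ℂ) : ℂ := ∑' k : ℕ, (a : ℂ) ^ k * z ^ (2 ^ k)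

/-- The partial sum `∑_{j < K} aʲ X^(2ʲ)` of `F a`, as a rational polynomial. -/
noncomputable def T (a : ℚ) (K : ℕ) : ℚ[X] := ∑ j ∈ Finset.range K, C (a ^ j) * X ^ (2 ^ j)

/-- Evaluation of a bivariate polynomial `P(X)(Y)`, an element of `ℚ[X][Y]`, at `X = z`, `Y = w`. -/
noncomputable def ev (z w : ℂ) : ℚ[X][X] →+* ℂ :=
  eval₂RingHom (aeval z : ℚ[X] →ₐ[ℚ] ℂ).toRingHom w

/-! ### The Mahler function -/

lemma norm_rat {a : ℚ} (h0 : 0 < a) : ‖(a : ℂ)‖ = (a : ℝ) := by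
  have : (0 : ℝ) < a := by exact_mod_cast h0
  rw [show (a : ℂ) = ((a : ℝ) : ℂ) by push_cast; rfl, Complex.norm_real, Real.norm_of_nonneg this.le]

lemma norm_term_le {a : ℚ} (h0 : 0 < a) {z : ℂ} (hz : ‖z‖ ≤ 1) (k : ℕ) :
    ‖(a : ℂ) ^ k * z ^ (2 ^ k)‖ ≤ (a : ℝ) ^ k * ‖z‖ := by
  have h : (0 : ℝ) < a := by exact_mod_cast h0
  rw [norm_mul, norm_pow, norm_pow, norm_rat h0]
  have := pow_le_of_le_one (norm_nonneg z) hz (n := 2 ^ k) (by positivity)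
  gcongr

lemma summable_geom {a : ℚ} (h0 : 0 < a) (h1 : a < 1) : Summable fun k : ℕ => (a : ℝ) ^ k :=
  summable_geometric_of_lt_one (by exact_mod_cast h0.le) (by exact_mod_cast h1)

lemma summable_F {a : ℚ} (h0 : 0 < a) (h1 : a < 1) {z : ℂ} (hz : ‖z‖ ≤ 1) :
    Summable fun k : ℕ => (a : ℂ) ^ k * z ^ (2 ^ k) :=
  Summable.of_norm_bounded ((summable_geom h0 h1).mul_right ‖z‖) (norm_term_le h0 hz)

lemma F_norm_le {a : ℚ} (h0 : 0 < a) (h1 : a < 1) {z : ℂ} (hz : ‖z‖ ≤ 1) :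
    ‖F a z‖ ≤ (1 - (a : ℝ))⁻¹ * ‖z‖ := by
  have h := (hasSum_geometric_of_lt_one (r := (a : ℝ)) (by exact_mod_cast h0.le)
    (by exact_mod_cast h1)).mul_right ‖z‖
  exact tsum_of_norm_bounded h (norm_term_le h0 hz)

lemma F_eq {a : ℚ} (h0 : 0 < a) (h1 : a < 1) {z : ℂ} (hz : ‖z‖ ≤ 1) :
    F a z = z + a * F a (z ^ 2) := by
  rw [F, (summable_F h0 h1 hz).tsum_eq_zero_add, F, ← tsum_mul_left]
  simp only [pow_zero, one_mul, pow_one]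
  congr 2
  ext k
  rw [← pow_mul]
  ring

lemma F_iter {a : ℚ} (h0 : 0 < a) (h1 : a < 1) {z : ℂ} (hz : ‖z‖ ≤ 1) (K : ℕ) :
    F a z = aeval z (T a K) + (a : ℂ) ^ K * F a (z ^ (2 ^ K)) := by
  induction K with
  | zero => simp [T]
  | succ K ih =>
    have hz' : ‖z ^ (2 ^ K)‖ ≤ 1 := by rw [norm_pow]; exact pow_le_one₀ (norm_nonneg z) hz
    rw [ih, F_eq h0 h1 hz', T, T, Finset.sum_range_succ]
    simp only [map_add, map_mul, map_pow, aeval_C, aeval_X, eq_ratCast]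
    rw [← pow_mul, ← pow_succ]
    ring

lemma F_analytic {a : ℚ} (h0 : 0 < a) (h1 : a < 1) : AnalyticAt ℂ (F a) 0 := by
  have : DifferentiableOn ℂ (F a) (Metric.ball 0 1) := by
    refine Complex.differentiableOn_tsum_of_summable_norm (summable_geom h0 h1) (fun i => by fun_prop)
      Metric.isOpen_ball fun i w hw => ?_
    have hw : ‖w‖ ≤ 1 := by simpa using (Metric.mem_ball.1 hw).le
    refine (norm_term_le h0 hw i).trans (mul_le_of_le_one_right ?_ hw)
    exact pow_nonneg (by exact_mod_cast h0.le) _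
  exact this.analyticAt (Metric.ball_mem_nhds 0 one_pos)

/-! ### Transcendence of the function -/

/-- Multiplied out, the hypothesis says that `R = -B / (n A)` is a rational solution of
`R(X) = X + a R(X²)`; there is none. After cancelling the common factor, `A(X²) ∣ A(X)`, so `A` is
constant; then `B` is a polynomial whose coefficients at `1, 2, 4, 8, …` are all nonzero. -/
lemma rational_case {a : ℚ} (h0 : a ≠ 0) {n : ℕ} (hn : n ≠ 0) {A B : ℚ[X]} (hA : A ≠ 0)
    (h : expand ℚ 2 A * B =
      A * (C a * expand ℚ 2 B - C (n : ℚ) * X * expand ℚ 2 A)) : False := by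
  -- reduce to coprime `A`, `B`
  obtain ⟨g, hg0, A', B', hcop, rfl, rfl⟩ :
      ∃ g : ℚ[X], g ≠ 0 ∧ ∃ A' B' : ℚ[X], IsCoprime A' B' ∧ A = g * A' ∧ B = g * B' := by
    obtain ⟨A', hA'⟩ := EuclideanDomain.gcd_dvd_left A B
    obtain ⟨B', hB'⟩ := EuclideanDomain.gcd_dvd_right A B
    have hg : EuclideanDomain.gcd A B ≠ 0 := fun h => hA (EuclideanDomain.gcd_eq_zero_iff.1 h).1
    refine ⟨_, hg, A', B', ?_, hA', hB'⟩
    have hb := EuclideanDomain.gcd_eq_gcd_ab A B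
    refine ⟨EuclideanDomain.gcdA A B, EuclideanDomain.gcdB A B, mul_left_cancel₀ hg ?_⟩
    linear_combination (-1) * hb - EuclideanDomain.gcdA A B * hA' - EuclideanDomain.gcdB A B * hB'
  have hA' : A' ≠ 0 := right_ne_zero_of_mul hA
  have hE : ∀ q : ℚ[X], q ≠ 0 → expand ℚ 2 q ≠ 0 := fun q hq => (expand_ne_zero two_pos).2 hq
  have h' : expand ℚ 2 A' * B' =
      A' * (C a * expand ℚ 2 B' - C (n : ℚ) * X * expand ℚ 2 A') := by
    refine mul_left_cancel₀ (mul_ne_zero (hE g hg0) hg0) ?_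
    simp only [map_mul] at h
    linear_combination h
  have hdvd : expand ℚ 2 A' ∣ A' := by
    have hc : IsCoprime (expand ℚ 2 A') (expand ℚ 2 B') := hcop.map (expand ℚ 2).toRingHom
    have hu : IsCoprime (expand ℚ 2 A') (C a) :=
      ⟨0, C a⁻¹, by rw [zero_mul, zero_add, ← C_mul, inv_mul_cancel₀ h0, C_1]⟩
    refine (hu.mul_right hc).dvd_of_dvd_mul_right ⟨B' + C (n : ℚ) * X * A', ?_⟩
    linear_combination -h'
  have hdeg := natDegree_le_of_dvd hdvd hA'
  rw [natDegree_expand] at hdeg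
  obtain ⟨c, rfl⟩ := natDegree_eq_zero.1 (show A'.natDegree = 0 by omega)
  have hc : c ≠ 0 := fun h => hA' (by simp [h])
  have h2 : B' = C a * expand ℚ 2 B' - C (n * c) * X := by
    refine mul_left_cancel₀ hA' ?_
    rw [expand_C] at h'
    rw [h']
    simp only [map_mul]
    ring
  have hco : ∀ k : ℕ, B'.coeff (2 ^ k) ≠ 0 := by
    intro k
    induction k with
    | zero =>
      rw [h2, coeff_sub, coeff_C_mul, coeff_expand two_pos, coeff_C_mul]
      simp [hn, hc]
    | succ k ih =>
      have hX : (X : ℚ[X]).coeff (2 ^ (k + 1)) = 0 :=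
        coeff_X_of_ne_one (by simp [pow_succ])
      rw [h2, coeff_sub, coeff_C_mul, coeff_expand two_pos, coeff_C_mul, hX,
        if_pos (Dvd.intro_left _ (pow_succ 2 k).symm), pow_succ, Nat.mul_div_cancel _ two_pos]
      simpa [h0] using ih
  exact hco _ (coeff_eq_zero_of_natDegree_lt (Nat.lt_two_pow_self (n := B'.natDegree)))

/-- `F a` satisfies no nontrivial polynomial relation over `ℚ[X]` near `0`. In a relation `P` of
minimal degree `n` in `Y`, replacing `X` by `X²` and using `F(z²) = (F(z) - z) / a` gives a second
relation `Q` of degree `n`; minimality makes `P` and `Q` proportional, and comparing the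
coefficients of `Yⁿ` and `Yⁿ⁻¹` yields the equation excluded by `rational_case`. -/
lemma no_relation {a : ℚ} (h0 : 0 < a) (h1 : a < 1) {P : ℚ[X][X]} (hP : P ≠ 0) :
    ¬ ∀ᶠ z in 𝓝 (0 : ℂ), ev z (F a z) P = 0 := by
  classical
  intro hrel
  have hex : ∃ n : ℕ, ∃ P : ℚ[X][X], P ≠ 0 ∧ P.natDegree = n ∧
      ∀ᶠ z in 𝓝 (0 : ℂ), ev z (F a z) P = 0 := ⟨_, P, hP, rfl, hrel⟩
  obtain ⟨P, hP, hPn, hrel⟩ := Nat.find_spec hex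
  have hmin : ∀ Q : ℚ[X][X], (∀ᶠ z in 𝓝 (0 : ℂ), ev z (F a z) Q = 0) →
      Q.degree < P.degree → Q = 0 := by
    intro Q hQ hd
    by_contra hQ0
    refine Nat.find_min hex (m := Q.natDegree) ?_ ⟨Q, hQ0, rfl, hQ⟩
    rw [← hPn]
    exact natDegree_lt_natDegree hQ0 hd
  generalize Nat.find hex = n at hPn
  have hA : P.coeff n ≠ 0 := by rw [← hPn]; exact leadingCoeff_ne_zero.2 hP
  have hn : n ≠ 0 := by
    rintro rfl
    obtain ⟨q, rfl⟩ := natDegree_eq_zero.1 hPn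
    rw [coeff_C_zero] at hA
    have hq : ∀ᶠ z in 𝓝 (0 : ℂ), (q.map (algebraMap ℚ ℂ)).IsRoot z := by
      refine hrel.mono fun z hz => ?_
      simpa [ev, aeval_def, eval_map] using hz
    have := eq_zero_of_infinite_isRoot _ (infinite_of_mem_nhds 0 hq)
    exact hA ((Polynomial.map_eq_zero _).1 this)
  -- the polynomial `a ^ n * P(z², (Y - z) / a)`
  set S : ℚ[X][X] := scaleRoots (P.map (expand ℚ 2).toRingHom) (C a) with hS
  have hinj : Function.Injective (expand ℚ 2).toRingHom := expand_injective two_pos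
  have hSn : S.natDegree = n := by
    rw [hS, natDegree_scaleRoots, natDegree_map_eq_of_injective hinj, hPn]
  have hSc : ∀ i, S.coeff i = expand ℚ 2 (P.coeff i) * C a ^ (n - i) := by
    intro i
    rw [hS, coeff_scaleRoots, natDegree_map_eq_of_injective hinj, hPn, coeff_map]
    rfl
  set Q : ℚ[X][X] := taylor (-X) S with hQ
  have hQrel : ∀ᶠ z in 𝓝 (0 : ℂ), ev z (F a z) Q = 0 := by
    have ht : Tendsto (fun z : ℂ => z ^ 2) (𝓝 0) (𝓝 0) := by
      have : Continuous fun z : ℂ => z ^ 2 := by fun_prop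
      simpa using this.tendsto 0
    filter_upwards [ht.eventually hrel, Metric.closedBall_mem_nhds (0 : ℂ) one_pos] with z hz hz1
    have hz1 : ‖z‖ ≤ 1 := by simpa using hz1
    have e1 : ev z (F a z) Q = ev z (a * F a (z ^ 2)) S := by
      simp only [ev, coe_eval₂RingHom, hQ, taylor_apply, eval₂_comp]
      congr 1
      simp [F_eq h0 h1 hz1]
    have e2 : ev z (a * F a (z ^ 2)) S =
        (a : ℂ) ^ (P.map (expand ℚ 2).toRingHom).natDegree *
          ev z (F a (z ^ 2)) (P.map (expand ℚ 2).toRingHom) := by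
      have := scaleRoots_eval₂_mul (p := P.map (expand ℚ 2).toRingHom)
        (aeval z : ℚ[X] →ₐ[ℚ] ℂ).toRingHom (F a (z ^ 2)) (C a)
      simpa [ev, hS] using this
    have e3 : ev z (F a (z ^ 2)) (P.map (expand ℚ 2).toRingHom) =
        ev (z ^ 2) (F a (z ^ 2)) P := by
      simp only [ev, coe_eval₂RingHom, eval₂_map]
      congr 1
      ext <;> simp
    rw [e1, e2, e3, hz, mul_zero]
  have hQn : Q.coeff n = expand ℚ 2 (P.coeff n) := by
    have h := leadingCoeff_taylor (-X) S
    rw [leadingCoeff, leadingCoeff, natDegree_taylor, hSn] at h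
    rw [hQ, h, hSc]
    simp
  have hQn1 : Q.coeff (n - 1) =
      C a * expand ℚ 2 (P.coeff (n - 1)) - C (n : ℚ) * X * expand ℚ 2 (P.coeff n) := by
    have hd : (hasseDeriv (n - 1) S).natDegree < 2 := by
      have := natDegree_hasseDeriv_le S (n - 1)
      omega
    rw [hQ, taylor_coeff, eval_eq_sum_range' hd, Finset.sum_range_succ, Finset.sum_range_one,
      hasseDeriv_coeff, hasseDeriv_coeff, hSc, hSc]
    have e1 : 1 + (n - 1) = n := by omega
    have e2 : n - (n - 1) = 1 := by omega
    have e3 : n.choose (n - 1) = n := by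
      rw [Nat.choose_symm (by omega : 1 ≤ n), Nat.choose_one_right]
    rw [zero_add, e1, e2, e3]
    simp
    ring
  have hWrel : C (expand ℚ 2 (P.coeff n)) * P - C (P.coeff n) * Q = 0 := by
    refine hmin _ ?_ ?_
    · filter_upwards [hrel, hQrel] with z hz hz'
      rw [map_sub, map_mul, map_mul, hz, hz', mul_zero, mul_zero, sub_zero]
    · rw [degree_eq_natDegree hP, hPn, degree_lt_iff_coeff_zero]
      intro m hm
      rw [coeff_sub, coeff_C_mul, coeff_C_mul]
      rcases hm.eq_or_lt with rfl | hm
      · rw [hQn]; ring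
      · rw [coeff_eq_zero_of_natDegree_lt (by omega : P.natDegree < m),
          coeff_eq_zero_of_natDegree_lt (by rw [hQ, natDegree_taylor]; omega : Q.natDegree < m)]
        ring
  refine rational_case h0.ne' hn hA (B := P.coeff (n - 1)) ?_
  have := congrArg (fun W => coeff W (n - 1)) hWrel
  simp only [coeff_sub, coeff_C_mul, coeff_zero] at this
  rw [hQn1] at this
  exact sub_eq_zero.1 this

/-! ### Lower bound for values at an algebraic number -/

open IntermediateField in
/-- Liouville-type inequality: if `q(θ)` is a nonzero algebraic integer and `|q| ≤ R` at every
conjugate of `θ`, then `|q(θ)| R^d ≥ 1`, because the norm of `q(θ)` from `ℚ(θ)` is a nonzero integer.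
The conjugates are only located in the disc of radius `W`. -/
lemma liouville {θ : ℂ} (hθ : IsAlgebraic ℚ θ) :
    ∃ (d : ℕ) (W : ℝ), 1 ≤ W ∧ ‖θ‖ ≤ W ∧ ∀ (q : ℚ[X]) (R : ℝ),
      (∀ w : ℂ, ‖w‖ ≤ W → ‖aeval w q‖ ≤ R) → aeval θ q ≠ 0 → IsIntegral ℤ (aeval θ q) →
      1 ≤ ‖aeval θ q‖ * R ^ d := by
  classical
  have hInt : IsIntegral ℚ θ := hθ.isIntegral
  have : FiniteDimensional ℚ ℚ⟮θ⟯ := adjoin.finiteDimensional hInt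
  set g : ℚ⟮θ⟯ := AdjoinSimple.gen ℚ θ with hg
  let ι : ℚ⟮θ⟯ →ₐ[ℚ] ℂ := ℚ⟮θ⟯.val
  have hι : ι g = θ := AdjoinSimple.coe_gen ℚ θ
  have hW : ∀ σ : ℚ⟮θ⟯ →ₐ[ℚ] ℂ, ‖σ g‖ ≤ 1 + ∑ τ : ℚ⟮θ⟯ →ₐ[ℚ] ℂ, ‖τ g‖ := fun σ =>
    (Finset.single_le_sum (f := fun τ : ℚ⟮θ⟯ →ₐ[ℚ] ℂ => ‖τ g‖) (fun _ _ => norm_nonneg _)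
      (Finset.mem_univ σ)).trans (by linarith)
  refine ⟨(Finset.univ.erase ι).card, 1 + ∑ τ : ℚ⟮θ⟯ →ₐ[ℚ] ℂ, ‖τ g‖, ?_, ?_, ?_⟩
  · have : 0 ≤ ∑ τ : ℚ⟮θ⟯ →ₐ[ℚ] ℂ, ‖τ g‖ := Finset.sum_nonneg fun _ _ => norm_nonneg _
    linarith
  · have h := hW ι
    rwa [hι] at h
  intro q R hR h0 hi
  have hσ : ∀ σ : ℚ⟮θ⟯ →ₐ[ℚ] ℂ, σ (aeval g q) = aeval (σ g) q := fun σ =>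
    (aeval_algHom_apply σ g q).symm
  have hx : ι (aeval g q) = aeval θ q := by rw [hσ, hι]
  have hxi : IsIntegral ℤ (aeval g q) := by
    rw [← hx] at hi
    exact (isIntegral_algHom_iff (ι.restrictScalars ℤ) ι.injective).1 hi
  have hx0 : aeval g q ≠ 0 := fun h => h0 (by rw [← hx, h, map_zero])
  obtain ⟨m, hm⟩ := IsIntegrallyClosed.isIntegral_iff.1 (Algebra.isIntegral_norm ℚ hxi)
  have hm0 : m ≠ 0 := by
    rintro rfl
    exact hx0 (Algebra.norm_eq_zero_iff.1 (by rw [← hm, map_zero]))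
  have hprod := Algebra.norm_eq_prod_embeddings ℚ ℂ (aeval g q)
  rw [← hm] at hprod
  have h1 : (1 : ℝ) ≤ ‖∏ σ : ℚ⟮θ⟯ →ₐ[ℚ] ℂ, σ (aeval g q)‖ := by
    rw [← hprod]
    have : (1 : ℝ) ≤ |(m : ℝ)| := by exact_mod_cast Int.one_le_abs hm0
    simpa using this
  refine h1.trans ?_
  rw [norm_prod, ← Finset.mul_prod_erase _ _ (Finset.mem_univ ι), hx]
  refine mul_le_mul_of_nonneg_left ?_ (norm_nonneg _)
  rw [← Finset.prod_const]
  exact Finset.prod_le_prod (fun _ _ => norm_nonneg _) fun σ _ => by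
    rw [hσ]; exact hR _ (hW σ)

/-! ### The auxiliary function -/

/-- The bivariate polynomial `∑ c i j Xⁱ Yʲ`, with both partial degrees at most `N`. -/
noncomputable def biPoly {N : ℕ} (c : Fin (N + 1) → Fin (N + 1) → ℚ) : ℚ[X][X] :=
  ∑ j, C (∑ i, C (c i j) * X ^ (i : ℕ)) * X ^ (j : ℕ)

lemma ev_biPoly {N : ℕ} (c : Fin (N + 1) → Fin (N + 1) → ℚ) (z w : ℂ) :
    ev z w (biPoly c) = ∑ j, ∑ i, (c i j : ℂ) * z ^ (i : ℕ) * w ^ (j : ℕ) := by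
  have hC : ∀ q : ℚ[X], ev z w (C q) = aeval z q := fun q => by simp [ev]
  have hX : ev z w X = w := by simp [ev]
  simp only [biPoly, map_sum (ev z w), map_mul (ev z w), map_pow (ev z w), hC, hX, Finset.sum_mul,
    map_sum (aeval z), map_mul, map_pow, aeval_C, aeval_X, eq_ratCast]

lemma biPoly_ne_zero {N : ℕ} {c : Fin (N + 1) → Fin (N + 1) → ℚ} (hc : c ≠ 0) :
    biPoly c ≠ 0 := by
  intro h
  refine hc ?_
  ext i j
  have := congrArg (fun P => (P.coeff (j : ℕ)).coeff (i : ℕ)) h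
  rw [Pi.zero_apply, Pi.zero_apply]
  simpa only [biPoly, finsetSum_coeff, coeff_C_mul, coeff_X_pow, Fin.val_inj, mul_ite, mul_one,
    mul_zero, Finset.sum_ite_eq, Finset.mem_univ, if_true, coeff_zero] using this

/-- Linear algebra gives a nonzero `P` of partial degrees at most `N` such that `P(z, F(z))` vanishes to
order `N²` at `0`: there are `(N + 1)²` unknown coefficients. The vanishing conditions are imposed
on the polynomial `P(X, T(X))`, where `T` is a partial sum of `F` that agrees with it to order `N²`. -/
lemma exists_aux {a : ℚ} (h0 : 0 < a) (h1 : a < 1) (N : ℕ) :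
    ∃ c : Fin (N + 1) → Fin (N + 1) → ℚ, c ≠ 0 ∧
      (fun z => ev z (F a z) (biPoly c)) =O[𝓝 0] fun z : ℂ => z ^ (N ^ 2) := by
  set M := N ^ 2 with hM
  let G : (Fin (N + 1) → Fin (N + 1) → ℚ) →ₗ[ℚ] ℚ[X] :=
    { toFun := fun c => ∑ j, ∑ i, C (c i j) * (X ^ (i : ℕ) * T a M ^ (j : ℕ))
      map_add' := fun c c' => by simp [add_mul, Finset.sum_add_distrib]
      map_smul' := fun r c => by simp [Finset.smul_sum, smul_eq_C_mul, mul_assoc] }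
  let L : (Fin (N + 1) → Fin (N + 1) → ℚ) →ₗ[ℚ] (Fin M → ℚ) :=
    LinearMap.pi fun m => (lcoeff ℚ (m : ℕ)).comp G
  -- `N ^ 2` conditions on `(N + 1) ^ 2` unknowns
  have hker : LinearMap.ker L ≠ ⊥ := by
    apply LinearMap.ker_ne_bot_of_finrank_lt
    simp only [Module.finrank_pi_fintype, Module.finrank_self, Finset.sum_const, Finset.card_univ,
      Fintype.card_fin, smul_eq_mul, mul_one, hM]
    nlinarith
  obtain ⟨c, hcL, hc⟩ := (Submodule.ne_bot_iff _).1 hker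
  refine ⟨c, hc, ?_⟩
  obtain ⟨g, hg⟩ : X ^ M ∣ G c := by
    rw [X_pow_dvd_iff]
    intro m hm
    exact congrFun (LinearMap.mem_ker.1 hcL) ⟨m, hm⟩
  have hb : ∀ q : ℚ[X], (fun z : ℂ => aeval z q) =O[𝓝 0] fun _ => (1 : ℂ) := fun q =>
    (q.continuous_aeval.continuousAt (x := (0 : ℂ))).isBigO_one ℂ
  have hF : F a =O[𝓝 0] fun _ => (1 : ℂ) := (F_analytic h0 h1).continuousAt.isBigO_one ℂ
  have hd : (fun z : ℂ => F a z - aeval z (T a M)) =O[𝓝 0] fun z : ℂ => z ^ M := by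
    refine IsBigO.of_bound ((1 - (a : ℝ))⁻¹) ?_
    filter_upwards [Metric.closedBall_mem_nhds (0 : ℂ) one_pos] with z hz
    have hz : ‖z‖ ≤ 1 := by simpa using hz
    have hz' : ‖z ^ (2 ^ M)‖ ≤ 1 := by rw [norm_pow]; exact pow_le_one₀ (norm_nonneg z) hz
    have ha : (0 : ℝ) < a := by exact_mod_cast h0
    have ha1 : (a : ℝ) < 1 := by exact_mod_cast h1
    have hT : (0 : ℝ) < 1 - a := by linarith
    rw [F_iter h0 h1 hz M, add_sub_cancel_left, norm_mul, norm_pow, norm_rat h0]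
    calc (a : ℝ) ^ M * ‖F a (z ^ (2 ^ M))‖ ≤ 1 * ((1 - (a : ℝ))⁻¹ * ‖z ^ (2 ^ M)‖) := by
          gcongr
          · exact pow_le_one₀ ha.le ha1.le
          · exact F_norm_le h0 h1 hz'
      _ ≤ (1 - (a : ℝ))⁻¹ * ‖z ^ M‖ := by
          rw [one_mul, norm_pow, norm_pow]
          exact mul_le_mul_of_nonneg_left
            (pow_le_pow_of_le_one (norm_nonneg z) hz Nat.lt_two_pow_self.le) (inv_nonneg.2 hT.le)
  have hpow : ∀ j : ℕ, (fun z : ℂ => F a z ^ j - aeval z (T a M) ^ j) =O[𝓝 0]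
      fun z : ℂ => z ^ M := by
    intro j
    induction j with
    | zero => simpa using isBigO_zero _ _
    | succ j ih =>
      have e : (fun z : ℂ => F a z ^ (j + 1) - aeval z (T a M) ^ (j + 1)) = fun z =>
          F a z * (F a z ^ j - aeval z (T a M) ^ j) +
            aeval z (T a M ^ j) * (F a z - aeval z (T a M)) := by
        ext z
        rw [map_pow]
        ring
      rw [e]
      simpa using (hF.mul ih).add ((hb (T a M ^ j)).mul hd)
  have hsplit : (fun z => ev z (F a z) (biPoly c)) = fun z => aeval z g * z ^ M +
      ∑ j : Fin (N + 1), ∑ i : Fin (N + 1), aeval z (C (c i j) * X ^ (i : ℕ)) *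
        (F a z ^ (j : ℕ) - aeval z (T a M) ^ (j : ℕ)) := by
    ext z
    have e : aeval z g * z ^ M = aeval z (G c) := by rw [hg]; simp [mul_comm]
    rw [e, ev_biPoly]
    simp only [G, LinearMap.coe_mk, AddHom.coe_mk, map_sum, map_mul, map_pow, aeval_C, aeval_X,
      eq_ratCast, ← Finset.sum_add_distrib]
    refine Finset.sum_congr rfl fun j _ => Finset.sum_congr rfl fun i _ => ?_
    ring
  rw [hsplit]
  refine IsBigO.add (by simpa using (hb g).mul (isBigO_refl (fun z : ℂ => z ^ M) (𝓝 0))) ?_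
  exact IsBigO.fun_sum fun j _ => IsBigO.fun_sum fun i _ => by
    simpa only [one_mul] using (hb _).mul (hpow j)

/-! ### Denominators and sizes of values -/

/-- If `s` and `v` are denominators of `z` and `y`, then `e sᴺ vᴺ` is a denominator of `P(z, y)`, with
`e` depending only on the coefficients of `P`. -/
lemma isIntegral_ev {N : ℕ} (c : Fin (N + 1) → Fin (N + 1) → ℚ) :
    ∃ e : ℤ, e ≠ 0 ∧ ∀ (z y : ℂ) (s v : ℤ), IsIntegral ℤ (s * z) → IsIntegral ℤ (v * y) →
      IsIntegral ℤ ((e * (s ^ N * v ^ N) : ℤ) * ev z y (biPoly c)) := by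
  obtain ⟨e, he⟩ := IsLocalization.exist_integer_multiples (nonZeroDivisors ℤ)
    (Finset.univ : Finset (Fin (N + 1) × Fin (N + 1))) fun x => c x.1 x.2
  refine ⟨e, nonZeroDivisors.coe_ne_zero e, fun z y s v hz hy => ?_⟩
  have hInt : ∀ m : ℤ, IsIntegral ℤ (m : ℂ) := fun m => by
    simpa using isIntegral_algebraMap (R := ℤ) (A := ℂ) (x := m)
  rw [ev_biPoly, Finset.mul_sum]
  refine IsIntegral.sum _ fun j _ => ?_
  rw [Finset.mul_sum]
  refine IsIntegral.sum _ fun i _ => ?_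
  obtain ⟨m, hm⟩ := he (i, j) (Finset.mem_univ _)
  have hm : ((m : ℤ) : ℂ) = (e : ℤ) * (c i j : ℂ) := by
    have : (m : ℚ) = (e : ℤ) * c i j := by simpa using hm
    exact_mod_cast congrArg (fun x : ℚ => (x : ℂ)) this
  have hi : (s : ℂ) ^ N = s ^ (N - i : ℕ) * s ^ (i : ℕ) := by
    rw [← pow_add]; congr 1; omega
  have hj : (v : ℂ) ^ N = v ^ (N - j : ℕ) * v ^ (j : ℕ) := by
    rw [← pow_add]; congr 1; omega
  have e1 : ((e * (s ^ N * v ^ N) : ℤ) : ℂ) * ((c i j : ℂ) * z ^ (i : ℕ) * y ^ (j : ℕ)) =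
      m * (s ^ (N - i : ℕ) * (s * z) ^ (i : ℕ)) * (v ^ (N - j : ℕ) * (v * y) ^ (j : ℕ)) := by
    push_cast
    rw [hm, hi, hj]
    ring
  rw [e1]
  exact ((hInt m).mul (((hInt s).pow _).mul (hz.pow _))).mul (((hInt v).pow _).mul (hy.pow _))

lemma norm_ev_le {N : ℕ} (c : Fin (N + 1) → Fin (N + 1) → ℚ) :
    ∃ H : ℝ, 0 ≤ H ∧ ∀ (z y : ℂ) (B : ℝ), ‖z‖ ≤ 1 → 1 ≤ B → ‖y‖ ≤ B →
      ‖ev z y (biPoly c)‖ ≤ H * B ^ N := by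
  refine ⟨∑ j, ∑ i, ‖(c i j : ℂ)‖, by positivity, fun z y B hz hB hy => ?_⟩
  rw [ev_biPoly, Finset.sum_mul]
  refine norm_sum_le_of_le _ fun j _ => ?_
  rw [Finset.sum_mul]
  refine norm_sum_le_of_le _ fun i _ => ?_
  rw [norm_mul, norm_mul, norm_pow, norm_pow, mul_assoc]
  refine mul_le_mul_of_nonneg_left ?_ (norm_nonneg _)
  calc ‖z‖ ^ (i : ℕ) * ‖y‖ ^ (j : ℕ) ≤ 1 * B ^ (j : ℕ) := by
        gcongr
        exact pow_le_one₀ (norm_nonneg z) hz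
    _ ≤ B ^ N := by rw [one_mul]; exact pow_le_pow_right₀ hB (by omega)

lemma exists_small {a B : ℝ} (ha : 0 < a) (h1 : a < 1) :
    ∃ N : ℕ, N ≠ 0 ∧ B * a ^ N < 1 := by
  have h : Tendsto (fun n : ℕ => B * a ^ n) atTop (𝓝 0) := by
    simpa using (tendsto_pow_atTop_nhds_zero_of_lt_one ha.le h1).const_mul B
  obtain ⟨N, h, hN⟩ := ((h.eventually_lt_const one_pos).and (eventually_ne_atTop 0)).exists
  exact ⟨N, hN, h⟩

/-! ### The value at the rational point -/

/-- Mahler's theorem for `F a` at the point `a`, for a rational number `0 < a < 1`. -/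
lemma transcendental_F {r p : ℕ} (hr : 0 < r) (hrp : r < p) {a : ℚ} (hap : a = r / p) :
    Transcendental ℚ (F a a) := by
  intro halg
  have hp : 0 < p := hr.trans hrp
  have hpQ : (0 : ℚ) < p := by exact_mod_cast hp
  have hrQ : (0 : ℚ) < r := by exact_mod_cast hr
  have hpC : (p : ℂ) ≠ 0 := by exact_mod_cast hp.ne'
  have hrC : (r : ℂ) ≠ 0 := by exact_mod_cast hr.ne'
  have hp1 : (1 : ℝ) ≤ p := by exact_mod_cast hp
  have h0 : 0 < a := by rw [hap]; positivity
  have h1 : a < 1 := by rw [hap, div_lt_one hpQ]; exact_mod_cast hrp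
  have h0R : (0 : ℝ) < a := by exact_mod_cast h0
  have h1R : (a : ℝ) < 1 := by exact_mod_cast h1
  have haC : (a : ℂ) = r / p := by rw [hap]; push_cast; rfl
  have ha1 : ‖(a : ℂ)‖ ≤ 1 := by rw [norm_rat h0]; exact h1R.le
  have haC0 : (a : ℂ) ≠ 0 := by exact_mod_cast h0.ne'
  set θ := F a a with hθ
  obtain ⟨d, W, hW1, hθW, hL⟩ := liouville halg
  obtain ⟨b, hb0, hb⟩ := ((IsFractionRing.isAlgebraic_iff ℤ ℚ ℂ).2 halg).exists_integral_multiple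
  rw [zsmul_eq_mul] at hb
  -- this choice of `N` makes the vanishing order `N ^ 2` beat the heights, which grow linearly in `N`
  obtain ⟨N, hN, hNs⟩ := exists_small h0R h1R (B := (p : ℝ) ^ (3 + 4 * d))
  obtain ⟨c, hc, hO⟩ := exists_aux h0 h1 N
  obtain ⟨e, he0, he⟩ := isIntegral_ev c
  obtain ⟨H, hH0, hH⟩ := norm_ev_le c
  obtain ⟨D, hD⟩ := hO.bound
  -- the points `a ^ (2 ^ k)`
  have h2k : Tendsto (fun k : ℕ => 2 ^ k) atTop atTop := tendsto_pow_atTop_atTop_of_one_lt one_lt_two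
  have hz0 : Tendsto (fun k : ℕ => (a : ℂ) ^ (2 ^ k)) atTop (𝓝 0) :=
    (tendsto_pow_atTop_nhds_zero_of_norm_lt_one (by rwa [norm_rat h0])).comp h2k
  have hz0' : Tendsto (fun k : ℕ => (a : ℂ) ^ (2 ^ k)) atTop (𝓝[≠] 0) :=
    tendsto_nhdsWithin_iff.2 ⟨hz0, Eventually.of_forall fun k => pow_ne_zero _ haC0⟩
  have hne : ∀ᶠ z in 𝓝[≠] (0 : ℂ), ev z (F a z) (biPoly c) ≠ 0 := by
    refine (AnalyticAt.eventually_eq_zero_or_eventually_ne_zero ?_).resolve_left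
      (no_relation h0 h1 (biPoly_ne_zero hc))
    simp only [ev_biPoly]
    have := F_analytic h0 h1
    fun_prop
  set A : ℝ := |(e : ℝ)| * |(b : ℝ)| ^ N with hA
  set B : ℝ := W + (1 - (a : ℝ))⁻¹
  have hinv : 0 < (1 - (a : ℝ))⁻¹ := inv_pos.2 (by linarith)
  have hB1 : 1 ≤ B := by linarith
  set ρ : ℝ := ((p : ℝ) ^ (3 + 4 * d) * (a : ℝ) ^ N) ^ N with hρ
  have hρ1 : ρ < 1 := pow_lt_one₀ (by positivity) hNs hN
  have hlim : Tendsto (fun k : ℕ => (A * D * (A * H * B ^ N) ^ d) * ρ ^ (2 ^ k)) atTop (𝓝 0) := by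
    have := (tendsto_pow_atTop_nhds_zero_of_lt_one (by positivity) hρ1).comp h2k
    simpa using this.const_mul (A * D * (A * H * B ^ N) ^ d)
  obtain ⟨k, hk, hEne, hEle⟩ := ((hlim.eventually_lt_const one_pos).and
    ((hz0'.eventually hne).and (hz0.eventually hD))).exists
  refine absurd hk (not_lt.2 ?_)
  set z : ℂ := (a : ℂ) ^ (2 ^ k) with hz
  set t : ℚ := eval a (T a k) with ht
  have htC : aeval (a : ℂ) (T a k) = (t : ℂ) := by
    have := aeval_algebraMap_apply ℂ a (T a k)
    simpa using this
  have htsum : (t : ℂ) = ∑ j ∈ Finset.range k, (a : ℂ) ^ (j + 2 ^ j) := by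
    rw [← htC]; simp [T, pow_add]
  have htn : ‖(t : ℂ)‖ ≤ (1 - (a : ℝ))⁻¹ := by
    rw [htsum, ← tsum_geometric_of_lt_one h0R.le h1R]
    refine (norm_sum_le_of_le _ (fun j _ => ?_)).trans
      ((summable_geom h0 h1).sum_le_tsum (Finset.range k) fun j _ => pow_nonneg h0R.le j)
    rw [norm_pow, norm_rat h0]
    exact pow_le_pow_of_le_one h0R.le h1R.le (Nat.le_add_right _ _)
  have hFz : F a z = (a : ℂ)⁻¹ ^ k * (θ - t) := by
    have := F_iter h0 h1 ha1 k
    rw [htC] at this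
    rw [hθ, this, add_sub_cancel_left, ← mul_assoc, ← mul_pow, inv_mul_cancel₀ haC0, one_pow,
      one_mul]
  -- `q(θ)` is `P(z, F z)` cleared of denominators by `m`; its conjugates are the `q(w)`, for `w` a
  -- conjugate of `θ`
  set s : ℤ := (p : ℤ) ^ (2 ^ k) with hs
  set v : ℤ := b * ((r : ℤ) ^ k * (p : ℤ) ^ (2 ^ k)) with hv
  set m : ℤ := e * (s ^ N * v ^ N) with hm
  set q : ℚ[X] := C (m : ℚ) * eval₂ (aeval (C (a ^ (2 ^ k)) : ℚ[X]) : ℚ[X] →ₐ[ℚ] ℚ[X]).toRingHom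
    (C (a⁻¹ ^ k) * (X - C t)) (biPoly c) with hq
  have hqw : ∀ w : ℂ, aeval w q = m * ev z ((a : ℂ)⁻¹ ^ k * (w - t)) (biPoly c) := by
    intro w
    have e1 := hom_eval₂ (biPoly c) (aeval (C (a ^ (2 ^ k)) : ℚ[X]) : ℚ[X] →ₐ[ℚ] ℚ[X]).toRingHom
      (aeval w : ℚ[X] →ₐ[ℚ] ℂ).toRingHom (C (a⁻¹ ^ k) * (X - C t))
    have e2 : ((aeval w : ℚ[X] →ₐ[ℚ] ℂ).toRingHom).comp
        (aeval (C (a ^ (2 ^ k)) : ℚ[X]) : ℚ[X] →ₐ[ℚ] ℚ[X]).toRingHom =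
        (aeval z : ℚ[X] →ₐ[ℚ] ℂ).toRingHom := by
      ext <;> simp [hz]
    have e3 : (aeval w : ℚ[X] →ₐ[ℚ] ℂ).toRingHom (C (a⁻¹ ^ k) * (X - C t)) =
        (a : ℂ)⁻¹ ^ k * (w - t) := by simp
    rw [e2, e3] at e1
    rw [hq, map_mul, aeval_C, ev, coe_eval₂RingHom, ← e1]
    simp
  have hqθ : aeval θ q = m * ev z (F a z) (biPoly c) := by rw [hqw, hFz]
  have hm0 : (m : ℂ) ≠ 0 := by
    have : m ≠ 0 := by positivity
    exact_mod_cast this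
  have hInt : IsIntegral ℤ (aeval θ q) := by
    have hI : ∀ n : ℤ, IsIntegral ℤ (n : ℂ) := fun n => by
      simpa using isIntegral_algebraMap (R := ℤ) (A := ℂ) (x := n)
    rw [hqθ]
    refine he z (F a z) s v ?_ ?_
    · have e1 : (s : ℂ) * z = ((r : ℤ) ^ (2 ^ k) : ℤ) := by
        rw [hs, hz, haC]; push_cast; rw [div_pow]; field_simp
      rw [e1]; exact hI _
    · have e1 : (v : ℂ) * F a z = ((p : ℤ) ^ (k + 2 ^ k) : ℤ) * (b * θ) -
          b * ∑ j ∈ Finset.range k, (p : ℂ) ^ (k + 2 ^ k) * (a : ℂ) ^ (j + 2 ^ j) := by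
        rw [← Finset.mul_sum, ← htsum, hFz, hv, haC, inv_div, div_pow]
        push_cast
        rw [pow_add]
        field_simp
      rw [e1]
      refine ((hI _).mul hb).sub ((hI b).mul (IsIntegral.sum _ fun j hj => ?_))
      have hj : j < k := Finset.mem_range.1 hj
      have hle : j + 2 ^ j ≤ k + 2 ^ k := by
        have h2 : 2 ^ j ≤ 2 ^ k := Nat.pow_le_pow_right two_pos hj.le
        exact Nat.add_le_add hj.le h2
      have e2 : (p : ℂ) ^ (k + 2 ^ k) * (a : ℂ) ^ (j + 2 ^ j) =
          ((p : ℤ) ^ (k + 2 ^ k - (j + 2 ^ j)) * (r : ℤ) ^ (j + 2 ^ j) : ℤ) := by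
        rw [haC, div_pow, ← Nat.sub_add_cancel hle, pow_add]
        push_cast
        rw [Nat.add_sub_cancel]
        field_simp
      rw [e2]; exact hI _
  -- size estimates
  have hk2 : k ≤ 2 ^ k := Nat.lt_two_pow_self.le
  have hpk : (p : ℝ) ^ k ≤ (p : ℝ) ^ (2 ^ k) := pow_le_pow_right₀ hp1 hk2
  have hmn : ‖(m : ℂ)‖ ≤ A * ((p : ℝ) ^ (2 ^ k)) ^ (3 * N) := by
    have hrpR : (r : ℝ) ≤ p := by exact_mod_cast hrp.le
    have hrk : (r : ℝ) ^ k ≤ (p : ℝ) ^ (2 ^ k) :=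
      (pow_le_pow_left₀ (by positivity) hrpR k).trans hpk
    have e1 : ‖(m : ℂ)‖ = A * (((p : ℝ) ^ (2 ^ k)) ^ N * ((r : ℝ) ^ k * (p : ℝ) ^ (2 ^ k)) ^ N) := by
      rw [Complex.norm_intCast, hm, hv, hs, hA]
      push_cast
      simp only [abs_mul, abs_pow, Nat.abs_cast]
      ring
    rw [e1]
    refine mul_le_mul_of_nonneg_left ?_ (by positivity)
    calc ((p : ℝ) ^ (2 ^ k)) ^ N * ((r : ℝ) ^ k * (p : ℝ) ^ (2 ^ k)) ^ N
        ≤ ((p : ℝ) ^ (2 ^ k)) ^ N * ((p : ℝ) ^ (2 ^ k) * (p : ℝ) ^ (2 ^ k)) ^ N := by gcongr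
      _ = ((p : ℝ) ^ (2 ^ k)) ^ (3 * N) := by
          generalize (p : ℝ) ^ (2 ^ k) = x
          ring
  have hz1 : ‖z‖ ≤ 1 := by rw [hz, norm_pow]; exact pow_le_one₀ (norm_nonneg _) ha1
  have hR : ∀ w : ℂ, ‖w‖ ≤ W →
      ‖aeval w q‖ ≤ A * H * B ^ N * ((p : ℝ) ^ (2 ^ k)) ^ (4 * N) := by
    intro w hw
    have hinvk : ‖(a : ℂ)⁻¹ ^ k‖ ≤ (p : ℝ) ^ (2 ^ k) := by
      have e1 : ‖(a : ℂ)⁻¹‖ ≤ p := by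
        rw [haC, inv_div, norm_div, Complex.norm_natCast, Complex.norm_natCast]
        exact div_le_self (by positivity) (by exact_mod_cast hr)
      rw [norm_pow]
      exact (pow_le_pow_left₀ (norm_nonneg _) e1 k).trans hpk
    have hy : ‖(a : ℂ)⁻¹ ^ k * (w - t)‖ ≤ (p : ℝ) ^ (2 ^ k) * B := by
      rw [norm_mul]
      have := (norm_sub_le w (t : ℂ)).trans (add_le_add hw htn)
      gcongr
    have hy1 : 1 ≤ (p : ℝ) ^ (2 ^ k) * B := one_le_mul_of_one_le_of_one_le (one_le_pow₀ hp1) hB1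
    rw [hqw, norm_mul]
    calc ‖(m : ℂ)‖ * ‖ev z ((a : ℂ)⁻¹ ^ k * (w - t)) (biPoly c)‖
        ≤ (A * ((p : ℝ) ^ (2 ^ k)) ^ (3 * N)) * (H * ((p : ℝ) ^ (2 ^ k) * B) ^ N) := by
          gcongr
          exact hH _ _ _ hz1 hy1 hy
      _ = A * H * B ^ N * ((p : ℝ) ^ (2 ^ k)) ^ (4 * N) := by
          rw [show 4 * N = 3 * N + N by ring, pow_add, mul_pow]
          ring
  have hmain := hL q _ hR (by rw [hqθ]; exact mul_ne_zero hm0 hEne) hInt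
  have hzn : ‖z ^ N ^ 2‖ = ((a : ℝ) ^ (N ^ 2)) ^ (2 ^ k) := by
    rw [hz, norm_pow, norm_pow, norm_rat h0, ← pow_mul, ← pow_mul, mul_comm]
  have hqn : ‖aeval θ q‖ ≤ A * ((p : ℝ) ^ (2 ^ k)) ^ (3 * N) *
      (D * ((a : ℝ) ^ (N ^ 2)) ^ (2 ^ k)) := by
    rw [hqθ, norm_mul, ← hzn]
    gcongr
  calc (1 : ℝ) ≤ ‖aeval θ q‖ * (A * H * B ^ N * ((p : ℝ) ^ (2 ^ k)) ^ (4 * N)) ^ d := hmain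
    _ ≤ A * ((p : ℝ) ^ (2 ^ k)) ^ (3 * N) * (D * ((a : ℝ) ^ (N ^ 2)) ^ (2 ^ k)) *
        (A * H * B ^ N * ((p : ℝ) ^ (2 ^ k)) ^ (4 * N)) ^ d := by gcongr
    _ = (A * D * (A * H * B ^ N) ^ d) * ρ ^ (2 ^ k) := by
        rw [hρ]
        ring

end Mahler
end


/-- For every integer `p ≥ 2` the real number
`Σ_{k=1}^∞ ((p−1)/p)^{k + 2^{k−1}}` is transcendental over `ℚ`.
The sum over `k ≥ 1` is written as a `tsum` over `k : ℕ` of the term at `k + 1`. -/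
theorem stmt_8 (p : ℕ) (hp : 2 ≤ p) :
    Transcendental ℚ
      (∑' k : ℕ, (((p : ℝ) - 1) / p) ^ ((k + 1) + 2 ^ ((k + 1) - 1))) := by
  set a : ℚ := ((p - 1 : ℕ) : ℚ) / p with ha
  have hF : Transcendental ℚ (Mahler.F a a) :=
    Mahler.transcendental_F (r := p - 1) (p := p) (by omega) (by omega) ha
  have haR : ((p : ℝ) - 1) / p = (a : ℝ) := by
    rw [ha]; push_cast [Nat.cast_sub (show 1 ≤ p by omega)]; rfl
  have ha0 : a ≠ 0 := div_ne_zero (by exact_mod_cast (by omega : p - 1 ≠ 0))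
    (by exact_mod_cast (by omega : p ≠ 0))
  -- the series is `a * F a a`, since `(k + 1) + 2 ^ k = 1 + k + 2 ^ k`
  have hsum : ((∑' k : ℕ, (((p : ℝ) - 1) / p) ^ ((k + 1) + 2 ^ ((k + 1) - 1)) : ℝ) : ℂ) =
      algebraMap ℚ ℂ a * Mahler.F a a := by
    rw [Complex.ofReal_tsum, Mahler.F, ← tsum_mul_left, haR]
    refine tsum_congr fun k => ?_
    rw [Nat.add_sub_cancel, eq_ratCast]
    push_cast
    ring
  intro halg
  have h1 : IsAlgebraic ℚ (algebraMap ℚ ℂ a * Mahler.F a a) := by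
    rw [← hsum]
    exact halg.algebraMap
  refine hF ?_
  have h2 := (isAlgebraic_algebraMap (R := ℚ) (A := ℂ) a⁻¹).mul h1
  rwa [← mul_assoc, ← map_mul, inv_mul_cancel₀ ha0, map_one, one_mul] at h2
end

section
/- For every integer p ≥ 2, the real number (4p³ + 3p² + 2p − 1)/(8p³) + (1/(8p²(p−1)))·Σ_{k=1}^∞ ((p−1)/p)^{k + 2^{k−1}} is transcendental (over ℚ). -/
/-!
The sum is `α * f(α)` with `α = (p - 1) / p` and `f(z) = ∑ α ^ k * z ^ (2 ^ k)`, so it suffices to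
prove that `f(α)` is transcendental. This is done by Mahler's method, based on the functional
equation `f(z) = z + α * f(z ^ 2)`, whose iterates read
`f(z) = ∑_{l < k} α ^ l * z ^ (2 ^ l) + α ^ k * f(z ^ (2 ^ k))`.

Suppose `β = f(α)` is algebraic. For every `N`, linear algebra over `ℚ` yields a nonzero integer
polynomial `P(z, w)` of degree at most `N` in each variable such that `E(z) = P(z, f(z))` is
`O(z ^ (N ^ 2))` at `0` (`exists_auxFun_isBigO`). The function `f` is transcendental over `ℂ(z)`
(`gapSeries_transcendental`): comparing a relation of minimal degree with its transform under
`z ↦ z ^ 2` gives an identity between polynomials in `z` which is impossible for degree reasons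
(`no_rational_solution`). Hence `E` is not identically zero, and `E(α ^ (2 ^ k)) ≠ 0` for large `k`.

Writing `α = a / b`, the iterated functional equation exhibits `E(α ^ (2 ^ k))`, up to an explicit
integer factor of size at most `b ^ (5 * N * 2 ^ k)`, as the value at `β` of an integer polynomial
of degree at most `N` (`specPoly`), bounded on any fixed disc by a constant times
`b ^ (5 * N * 2 ^ k)`. Since the norm of a nonzero algebraic integer has absolute value at least
`1` (`one_le_norm_aeval_mul`), `|E(α ^ (2 ^ k))|` is at least of order `B ^ (- N * 2 ^ k)` with `B`
independent of `N` and `k`, whereas it is at most of order `|α| ^ (N ^ 2 * 2 ^ k)`. For `N` large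
this is a contradiction as `k → ∞`.
-/

open Polynomial Filter Topology Asymptotics

/-! ### A Liouville-type lower bound -/

/-- The version of `one_le_norm_aeval_mul` for the image of `g` under one complex embedding `τ` of a
number field `K`. The bound is `1 ≤ |N(q ^ N * Q(g))|`, where `q * g` is integral; every embedding
other than `τ` contributes at most `q ^ N * H` to the norm. -/
theorem one_le_norm_aeval_mul_of_algHom {K : Type*} [Field K] [Algebra ℚ K]
    [FiniteDimensional ℚ K] (τ : K →ₐ[ℚ] ℂ) (g : K) :
    ∃ q d R : ℕ, 0 < q ∧ ∀ (Q : ℤ[X]) (N : ℕ) (H : ℝ), Q.natDegree ≤ N →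
      (∀ z : ℂ, ‖z‖ ≤ R → ‖aeval z Q‖ ≤ H) → aeval (τ g) Q ≠ 0 →
      1 ≤ ‖aeval (τ g) Q‖ * ((q : ℝ) ^ N) ^ (d + 1) * H ^ d := by
  classical
  have hgalg : IsAlgebraic ℤ g := by
    rw [IsFractionRing.isAlgebraic_iff ℤ ℚ K]
    exact Algebra.IsAlgebraic.isAlgebraic g
  obtain ⟨y, hy0, hy⟩ := hgalg.exists_integral_multiple
  have hy' : IsIntegral ℤ ((y.natAbs : K) * g) := by
    rcases Int.natAbs_eq y with h | h
    · rw [h, zsmul_eq_mul] at hy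
      simpa using hy
    · rw [h, zsmul_eq_mul] at hy
      simpa using hy.neg
  obtain ⟨R, hR⟩ := exists_nat_ge (∑ σ : K →ₐ[ℚ] ℂ, ‖σ g‖)
  refine ⟨y.natAbs, Fintype.card (K →ₐ[ℚ] ℂ) - 1, R, Int.natAbs_pos.2 hy0, ?_⟩
  set q := y.natAbs with hq
  intro Q N H hN hH hne
  set η : K := (q : K) ^ N * aeval g Q with hη
  have hint : IsIntegral ℤ η := by
    rw [hη, aeval_eq_sum_range' (Nat.lt_succ_of_le hN), Finset.mul_sum]
    refine IsIntegral.sum _ fun i hi => ?_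
    have hi' : i ≤ N := Nat.lt_succ_iff.1 (Finset.mem_range.1 hi)
    have : (q : K) ^ N * (Q.coeff i • g ^ i)
        = ((Q.coeff i * (q : ℤ) ^ (N - i) : ℤ) : K) * ((q : K) * g) ^ i := by
      rw [zsmul_eq_mul, ← Nat.sub_add_cancel hi', pow_add]
      push_cast
      rw [Nat.sub_add_cancel hi']
      ring
    rw [this]
    exact IsIntegral.mul (isIntegral_algebraMap (R := ℤ) (A := K)) (hy'.pow i)
  have hσ : ∀ σ : K →ₐ[ℚ] ℂ, σ η = (q : ℂ) ^ N * aeval (σ g) Q := by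
    intro σ
    rw [hη, map_mul, map_pow, map_natCast]
    congr 1
    exact (aeval_algHom_apply (σ.restrictScalars ℤ) g Q).symm
  have hq0 : (q : ℂ) ≠ 0 := by
    exact_mod_cast (Int.natAbs_pos.2 hy0).ne'
  have hη0 : η ≠ 0 := by
    intro h
    have h1 := hσ τ
    rw [h, map_zero] at h1
    exact mul_ne_zero (pow_ne_zero _ hq0) hne h1.symm
  obtain ⟨n, hn⟩ := IsIntegrallyClosed.isIntegral_iff.1 (Algebra.isIntegral_norm (R := ℤ) ℚ hint)
  have hn0 : n ≠ 0 := by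
    rintro rfl
    rw [map_zero] at hn
    exact hη0 (Algebra.norm_eq_zero_iff.1 hn.symm)
  have hprod := Algebra.norm_eq_prod_embeddings ℚ ℂ η
  have h1 : (1 : ℝ) ≤ ∏ σ : K →ₐ[ℚ] ℂ, ‖σ η‖ := by
    rw [← norm_prod, ← hprod, ← hn]
    simp only [eq_intCast, Rat.cast_intCast, eq_ratCast, Complex.norm_intCast]
    exact_mod_cast Int.one_le_abs hn0
  rw [← Finset.mul_prod_erase _ _ (Finset.mem_univ τ), hσ] at h1
  have h2 : ∏ σ ∈ Finset.univ.erase τ, ‖σ η‖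
      ≤ ((q : ℝ) ^ N * H) ^ (Fintype.card (K →ₐ[ℚ] ℂ) - 1) := by
    rw [← Finset.card_univ, ← Finset.card_erase_of_mem (Finset.mem_univ τ), ← Finset.prod_const]
    refine Finset.prod_le_prod (fun _ _ => norm_nonneg _) ?_
    · intro σ _
      rw [hσ, norm_mul, norm_pow, Complex.norm_natCast]
      gcongr
      refine hH _ (le_trans ?_ hR)
      exact Finset.single_le_sum (f := fun σ : K →ₐ[ℚ] ℂ => ‖σ g‖)
        (fun _ _ => norm_nonneg _) (Finset.mem_univ σ)
  calc (1 : ℝ) ≤ _ := h1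
    _ ≤ ‖(q : ℂ) ^ N * aeval (τ g) Q‖ * ((q : ℝ) ^ N * H) ^ (Fintype.card (K →ₐ[ℚ] ℂ) - 1) := by
      gcongr
    _ = _ := by
      rw [norm_mul, norm_pow, Complex.norm_natCast]
      ring

/-- Values at an algebraic number `β` of integer polynomials `Q` of degree at most `N` are bounded
below, when nonzero, in terms of the supremum `H` of `Q` on a disc containing all conjugates of `β`.
The constants depend on `β` only. -/
theorem one_le_norm_aeval_mul {β : ℂ} (hβ : IsAlgebraic ℚ β) :
    ∃ q d R : ℕ, 0 < q ∧ ∀ (Q : ℤ[X]) (N : ℕ) (H : ℝ), Q.natDegree ≤ N →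
      (∀ z : ℂ, ‖z‖ ≤ R → ‖aeval z Q‖ ≤ H) → aeval β Q ≠ 0 →
      1 ≤ ‖aeval β Q‖ * ((q : ℝ) ^ N) ^ (d + 1) * H ^ d := by
  have := IntermediateField.adjoin.finiteDimensional hβ.isIntegral
  have h := one_le_norm_aeval_mul_of_algHom (IntermediateField.adjoin ℚ {β}).val
    (IntermediateField.AdjoinSimple.gen ℚ β)
  have hg : (IntermediateField.adjoin ℚ {β}).val (IntermediateField.AdjoinSimple.gen ℚ β) = β :=
    IntermediateField.AdjoinSimple.algebraMap_gen ℚ β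
  rwa [hg] at h

/-! ### The gap series and its functional equation -/

/-- The Mahler function `f(z) = ∑ α ^ k * z ^ (2 ^ k)`, used for `‖α‖ < 1` and `‖z‖ ≤ 1`, where
the series converges. -/
noncomputable def gapSeries (α z : ℂ) : ℂ := ∑' k : ℕ, α ^ k * z ^ 2 ^ k

theorem norm_gapSeries_term_le {α z : ℂ} (hz : ‖z‖ ≤ 1) (k : ℕ) :
    ‖α ^ k * z ^ 2 ^ k‖ ≤ ‖α‖ ^ k := by
  rw [norm_mul, norm_pow, norm_pow]
  exact mul_le_of_le_one_right (by positivity) (pow_le_one₀ (norm_nonneg _) hz)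

theorem gapSeries_eq {α z : ℂ} (hα : ‖α‖ < 1) (hz : ‖z‖ ≤ 1) :
    gapSeries α z = z + α * gapSeries α (z ^ 2) := by
  have hs : Summable fun k : ℕ => α ^ k * z ^ 2 ^ k :=
    Summable.of_norm_bounded (summable_geometric_of_lt_one (norm_nonneg _) hα)
      (norm_gapSeries_term_le hz)
  rw [gapSeries, hs.tsum_eq_zero_add, gapSeries, ← tsum_mul_left]
  congr 1
  · simp
  · congr 1
    ext k
    rw [← pow_mul]
    ring

theorem gapSeries_eq_sum_add {α z : ℂ} (hα : ‖α‖ < 1) (hz : ‖z‖ ≤ 1) (k : ℕ) :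
    gapSeries α z
      = ∑ l ∈ Finset.range k, α ^ l * z ^ 2 ^ l + α ^ k * gapSeries α (z ^ 2 ^ k) := by
  induction k with
  | zero => simp
  | succ k ih =>
    have h : ‖z ^ 2 ^ k‖ ≤ 1 := by
      rw [norm_pow]; exact pow_le_one₀ (norm_nonneg _) hz
    rw [ih, Finset.sum_range_succ, gapSeries_eq hα h, ← pow_mul, ← pow_succ]
    ring

theorem analyticAt_gapSeries {α : ℂ} (hα : ‖α‖ < 1) : AnalyticAt ℂ (gapSeries α) 0 := by
  have : DifferentiableOn ℂ (gapSeries α) (Metric.ball 0 1) :=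
    Complex.differentiableOn_tsum_of_summable_norm
      (summable_geometric_of_lt_one (norm_nonneg _) hα)
      (fun k => by fun_prop) Metric.isOpen_ball
      (fun k z hz => norm_gapSeries_term_le (by simpa using (mem_ball_zero_iff.1 hz).le) k)
  exact this.analyticAt (Metric.ball_mem_nhds 0 one_pos)

/-! ### Transcendence of the gap series over the rational functions -/

/-- With `r = b / c` the hypothesis says `r(z) = α * r(z ^ 2) - n * z`. The three terms of the
cleared identity have degrees `2 deg c + deg b`, `deg c + 2 deg b` and `3 deg c + 1`, and the last
two differ by parity, so the largest degree is attained only once. -/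
theorem no_rational_solution {α : ℂ} {b c : ℂ[X]} {n : ℕ} (hn : n ≠ 0) (hc : c ≠ 0)
    (h : expand ℂ 2 c * b = c * (C α * expand ℂ 2 b - (n : ℂ[X]) * X * expand ℂ 2 c)) :
    α = 0 := by
  by_contra hα
  have hec : expand ℂ 2 c ≠ 0 := by simpa [expand_eq_zero] using hc
  have hn' : (n : ℂ[X]) = C (n : ℂ) := by simp
  have hn0 : (n : ℂ) ≠ 0 := by exact_mod_cast hn
  have d3 : (c * (C (n : ℂ) * X * expand ℂ 2 c)).natDegree = 3 * c.natDegree + 1 := by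
    rw [natDegree_mul hc (mul_ne_zero (mul_ne_zero (by simpa using hn0) X_ne_zero) hec),
      natDegree_mul (mul_ne_zero (by simpa using hn0) X_ne_zero) hec, natDegree_C_mul_X _ hn0,
      natDegree_expand]
    ring
  have hne3 : c * (C (n : ℂ) * X * expand ℂ 2 c) ≠ 0 := by
    intro h0; rw [h0] at d3; simp at d3
  by_cases hb : b = 0
  · subst hb
    rw [hn'] at h
    apply hne3
    simp at h ⊢
    simpa using h
  have heb : expand ℂ 2 b ≠ 0 := by simpa [expand_eq_zero] using hb
  have d1 : (expand ℂ 2 c * b).natDegree = 2 * c.natDegree + b.natDegree := by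
    rw [natDegree_mul hec hb, natDegree_expand]; ring
  have d2 : (c * (C α * expand ℂ 2 b)).natDegree = c.natDegree + 2 * b.natDegree := by
    rw [natDegree_mul hc (mul_ne_zero (by simpa using hα) heb), natDegree_C_mul hα,
      natDegree_expand]
    ring
  rw [hn', mul_sub] at h
  rcases le_or_gt b.natDegree c.natDegree with hbc | hbc
  · have h' : c * (C (n : ℂ) * X * expand ℂ 2 c)
        = c * (C α * expand ℂ 2 b) - expand ℂ 2 c * b := by rw [h]; ring
    have := natDegree_sub_le (c * (C α * expand ℂ 2 b)) (expand ℂ 2 c * b)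
    rw [← h', d1, d2, d3] at this
    have := le_max_iff.1 this
    omega
  · rcases lt_or_ge (2 * b.natDegree) (2 * c.natDegree + 1) with hlt | hge
    · omega
    · have h' : c * (C α * expand ℂ 2 b)
          = expand ℂ 2 c * b + c * (C (n : ℂ) * X * expand ℂ 2 c) := by rw [h]; ring
      have := natDegree_add_le (expand ℂ 2 c * b) (c * (C (n : ℂ) * X * expand ℂ 2 c))
      rw [← h', d1, d2, d3] at this
      have := le_max_iff.1 this
      omega

/-- Induction on the degree in `w` of a relation `P(z, f(z)) = 0`, valid near `z = 0`. Substituting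
`z ^ 2` for `z` gives a second relation `Q` of the same degree, and eliminating the leading terms
gives a relation of smaller degree, which is zero; its coefficient of index `n - 1` contradicts
`no_rational_solution`. -/
theorem gapSeries_transcendental {α : ℂ} (hα : ‖α‖ < 1) (hα0 : α ≠ 0) (n : ℕ) :
    ∀ P : ℂ[X][X], P.natDegree < n →
      (∀ᶠ z in 𝓝 (0 : ℂ), P.evalEval z (gapSeries α z) = 0) → P = 0 := by
  induction n with
  | zero => intro P hP; omega
  | succ n ih =>
    intro P hPn hP
    by_contra hP0
    have hdeg : P.natDegree = n := by
      rcases Nat.lt_succ_iff_lt_or_eq.1 hPn with h | h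
      · exact absurd (ih P h hP) hP0
      · exact h
    set c := P.coeff n with hcdef
    have hc : c ≠ 0 := by
      rw [hcdef, ← hdeg]; exact leadingCoeff_ne_zero.2 hP0
    -- `Q(z, w) = α ^ n * P(z ^ 2, (w - z) / α)`
    set Q : ℂ[X][X] := ∑ j ∈ Finset.range (n + 1),
      C (C (α ^ (n - j)) * expand ℂ 2 (P.coeff j)) * (X + C (-X)) ^ j with hQ
    have hQcoeff : ∀ m, Q.coeff m = ∑ j ∈ Finset.range (n + 1),
        C (α ^ (n - j)) * expand ℂ 2 (P.coeff j) * ((-X) ^ (j - m) * (j.choose m : ℂ[X])) := by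
      intro m
      simp only [hQ, finsetSum_coeff, coeff_C_mul, coeff_X_add_C_pow]
    have hQdeg : Q.natDegree ≤ n := by
      refine natDegree_sum_le_of_forall_le _ _ fun j hj => ?_
      refine (natDegree_C_mul_le _ _).trans ?_
      rw [natDegree_pow, natDegree_X_add_C]
      have := Finset.mem_range.1 hj
      omega
    have hQn : Q.coeff n = expand ℂ 2 c := by
      rw [hQcoeff, Finset.sum_range_succ, Finset.sum_eq_zero]
      · simp [hcdef]
      · intro j hj
        rw [Nat.choose_eq_zero_of_lt (Finset.mem_range.1 hj)]
        simp
    have hsmall : ∀ᶠ z in 𝓝 (0 : ℂ), ‖z‖ ≤ 1 := by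
      filter_upwards [Metric.ball_mem_nhds (0 : ℂ) one_pos] with z hz
      simpa using (mem_ball_zero_iff.1 hz).le
    have hsq : Tendsto (fun z : ℂ => z ^ 2) (𝓝 0) (𝓝 0) := by
      have : Continuous fun z : ℂ => z ^ 2 := by fun_prop
      simpa using this.tendsto 0
    have hQ0 : ∀ᶠ z in 𝓝 (0 : ℂ), Q.evalEval z (gapSeries α z) = 0 := by
      filter_upwards [hsq.eventually hP, hsmall] with z hz hz1
      have hf := gapSeries_eq hα hz1
      have hPe : P.evalEval (z ^ 2) (gapSeries α (z ^ 2))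
          = ∑ j ∈ Finset.range (n + 1),
            (P.coeff j).eval (z ^ 2) * gapSeries α (z ^ 2) ^ j := by
        rw [evalEval, eval_eq_sum_range (p := P), hdeg, eval_finsetSum]
        simp
      have : Q.evalEval z (gapSeries α z)
          = α ^ n * P.evalEval (z ^ 2) (gapSeries α (z ^ 2)) := by
        rw [hPe, hQ, Finset.mul_sum, evalEval, eval_finsetSum, eval_finsetSum]
        refine Finset.sum_congr rfl fun j hj => ?_
        have hj' : j ≤ n := Nat.lt_succ_iff.1 (Finset.mem_range.1 hj)
        simp only [eval_mul, eval_C, eval_pow, eval_add, eval_X, expand_eval, eval_neg]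
        rw [hf, add_neg_cancel_comm, mul_pow, ← Nat.sub_add_cancel hj', pow_add,
          Nat.sub_add_cancel hj']
        ring
      rw [this, hz, mul_zero]
    set S := C (expand ℂ 2 c) * P - C c * Q with hS
    have hS0 : ∀ᶠ z in 𝓝 (0 : ℂ), S.evalEval z (gapSeries α z) = 0 := by
      filter_upwards [hP, hQ0] with z h1 h2
      rw [evalEval] at h1 h2 ⊢
      simp [hS, h1, h2]
    rcases Nat.eq_zero_or_pos n with h0 | hpos
    · -- for `n = 0` the polynomial `c` vanishes near `0`
      subst h0
      have hPC : P = C c := eq_C_of_natDegree_eq_zero hdeg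
      apply hc
      refine eq_zero_of_infinite_isRoot c (infinite_of_mem_nhds (0 : ℂ) ?_)
      filter_upwards [hP] with z hz
      rwa [hPC, evalEval_C] at hz
    have hSdeg : S.natDegree < n := by
      have h1 : S.natDegree ≤ n := by
        refine (natDegree_sub_le _ _).trans (max_le ?_ ?_)
        · exact (natDegree_C_mul_le _ _).trans hdeg.le
        · exact (natDegree_C_mul_le _ _).trans hQdeg
      have h2 : S.coeff n = 0 := by
        simp only [hS, coeff_sub, coeff_C_mul, hQn, ← hcdef]
        ring
      rcases h1.lt_or_eq with h | h
      · exact h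
      · have : S = 0 := by
          rw [← leadingCoeff_eq_zero, leadingCoeff, h, h2]
        rw [this]; simpa using hpos
    have hSz := ih S hSdeg hS0
    have hco : S.coeff (n - 1) = 0 := by rw [hSz]; simp
    obtain ⟨m, rfl⟩ : ∃ m, n = m + 1 := ⟨n - 1, by omega⟩
    rw [Nat.add_sub_cancel] at hco
    have hQm : Q.coeff m
        = C α * expand ℂ 2 (P.coeff m) - ((m + 1 : ℕ) : ℂ[X]) * X * expand ℂ 2 c := by
      rw [hQcoeff, Finset.sum_range_succ, Finset.sum_range_succ, Finset.sum_eq_zero]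
      · simp [hcdef]
        ring
      · intro j hj
        rw [Nat.choose_eq_zero_of_lt (Finset.mem_range.1 hj)]
        simp
    apply hα0
    refine no_rational_solution (b := P.coeff m) (n := m + 1) (by omega) hc ?_
    rw [hS, coeff_sub, coeff_C_mul, coeff_C_mul, hQm] at hco
    exact sub_eq_zero.1 hco

/-! ### The auxiliary function -/

/-- There are `(N + 1) ^ 2` unknown coefficients against `M` linear conditions; a rational solution
is scaled to an integral one. -/
theorem exists_int_coeff_of_rat (F : ℚ[X]) (N M : ℕ) (hM : M < (N + 1) ^ 2) :
    ∃ c : Fin (N + 1) → Fin (N + 1) → ℤ, c ≠ 0 ∧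
      X ^ M ∣ ∑ i, ∑ j, C (c i j : ℚ) * X ^ (i : ℕ) * F ^ (j : ℕ) := by
  let L : (Fin (N + 1) → Fin (N + 1) → ℚ) →ₗ[ℚ] (Fin M → ℚ) :=
    { toFun := fun c m => (∑ i, ∑ j, C (c i j) * X ^ (i : ℕ) * F ^ (j : ℕ)).coeff m
      map_add' := by
        intro c c'
        ext m
        simp [add_mul, Finset.sum_add_distrib]
      map_smul' := by
        intro r c
        ext m
        simp [mul_assoc, Finset.mul_sum, finsetSum_coeff] }
  have hker : L.ker ≠ ⊥ := by
    apply LinearMap.ker_ne_bot_of_finrank_lt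
    simpa [Module.finrank_pi_fintype, sq] using hM
  obtain ⟨c, hcL, hc0⟩ := (Submodule.ne_bot_iff _).1 hker
  obtain ⟨D, hD⟩ := IsLocalization.exist_integer_multiples_of_finite (nonZeroDivisors ℤ)
    (fun ij : Fin (N + 1) × Fin (N + 1) => c ij.1 ij.2)
  choose c' hc' using hD
  have hD0 : ((D : ℤ) : ℚ) ≠ 0 := by
    exact_mod_cast nonZeroDivisors.coe_ne_zero D
  have hcc : ∀ i j, (c' (i, j) : ℚ) = (D : ℤ) * c i j := by
    intro i j
    simpa using hc' (i, j)
  refine ⟨fun i j => c' (i, j), ?_, ?_⟩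
  · intro h0
    apply hc0
    ext i j
    have h1 : c' (i, j) = 0 := congrFun (congrFun h0 i) j
    have h2 := hcc i j
    rw [h1] at h2
    simpa [hD0] using h2.symm
  · have : ∑ i, ∑ j, C (c' (i, j) : ℚ) * X ^ (i : ℕ) * F ^ (j : ℕ)
        = C ((D : ℤ) : ℚ) * ∑ i, ∑ j, C (c i j) * X ^ (i : ℕ) * F ^ (j : ℕ) := by
      simp only [hcc, Finset.mul_sum, C_mul, mul_assoc]
    rw [this]
    refine Dvd.dvd.mul_left (X_pow_dvd_iff.2 fun m hm => ?_) _
    exact congrFun (LinearMap.mem_ker.1 hcL) ⟨m, hm⟩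

theorem pow_sub_pow_isBigO {f g h : ℂ → ℂ} (hf : f =O[𝓝 0] (1 : ℂ → ℂ))
    (hg : g =O[𝓝 0] (1 : ℂ → ℂ)) (hfg : (fun z => f z - g z) =O[𝓝 0] h) (j : ℕ) :
    (fun z => f z ^ j - g z ^ j) =O[𝓝 0] h := by
  induction j with
  | zero => simpa using isBigO_zero h (𝓝 0)
  | succ j ih =>
    have h1 : (fun z => f z * (f z ^ j - g z ^ j)) =O[𝓝 0] h := by
      simpa using hf.mul ih
    have h2 : (fun z => (f z - g z) * g z ^ j) =O[𝓝 0] h := by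
      simpa using hfg.mul (hg.pow j)
    refine (h1.add h2).congr_left fun z => ?_
    ring

/-- The function `E(z) = P(z, f(z))` attached to `P(z, w) = ∑ c i j * z ^ i * w ^ j`. -/
noncomputable def auxFun (α : ℂ) {N : ℕ} (c : Fin (N + 1) → Fin (N + 1) → ℤ) (z : ℂ) : ℂ :=
  ∑ i, ∑ j, (c i j : ℂ) * z ^ (i : ℕ) * gapSeries α z ^ (j : ℕ)

/-- The coefficients are chosen so that `P(z, F(z))` is divisible by `z ^ (N ^ 2)`, where `F` is the
truncation of `f` after `N ^ 2` terms; this suffices as `f - F = O(z ^ (2 ^ (N ^ 2)))`. -/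
theorem exists_auxFun_isBigO {r : ℚ} (hr : ‖(r : ℂ)‖ < 1) (N : ℕ) :
    ∃ c : Fin (N + 1) → Fin (N + 1) → ℤ, c ≠ 0 ∧
      auxFun r c =O[𝓝 0] fun z => z ^ N ^ 2 := by
  set M := N ^ 2 with hM
  set F : ℚ[X] := ∑ l ∈ Finset.range M, C (r ^ l) * X ^ 2 ^ l with hF
  obtain ⟨c, hc0, G, hG⟩ := exists_int_coeff_of_rat F N M (by rw [hM]; gcongr; omega)
  refine ⟨c, hc0, ?_⟩
  have hf1 : gapSeries r =O[𝓝 0] (1 : ℂ → ℂ) := (analyticAt_gapSeries hr).continuousAt.isBigO_one ℂ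
  have hcont : ∀ P : ℚ[X], (fun z : ℂ => aeval z P) =O[𝓝 0] (1 : ℂ → ℂ) := fun P =>
    (P.continuous_aeval.continuousAt (x := (0 : ℂ))).isBigO_one ℂ
  have hsmall : ∀ᶠ z in 𝓝 (0 : ℂ), ‖z‖ ≤ 1 := by
    filter_upwards [Metric.ball_mem_nhds (0 : ℂ) one_pos] with z hz
    simpa using (mem_ball_zero_iff.1 hz).le
  have hpow : (fun z : ℂ => z ^ 2 ^ M) =O[𝓝 0] fun z => z ^ M := by
    refine IsBigO.of_bound 1 ?_
    filter_upwards [hsmall] with z hz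
    rw [norm_pow, norm_pow, one_mul]
    exact pow_le_pow_of_le_one (norm_nonneg _) hz M.lt_two_pow_self.le
  have hfF : (fun z => gapSeries r z - aeval z F) =O[𝓝 0] fun z : ℂ => z ^ M := by
    have h0 : gapSeries r =O[𝓝 0] fun w => w := by
      have := (analyticAt_gapSeries hr).differentiableAt.isBigO_sub
      have h00 : gapSeries (r : ℂ) 0 = 0 := by simp [gapSeries]
      simpa only [h00, sub_zero] using this
    have ht : Tendsto (fun z : ℂ => z ^ 2 ^ M) (𝓝 0) (𝓝 0) := by
      have : Continuous fun z : ℂ => z ^ 2 ^ M := by fun_prop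
      simpa using this.tendsto 0
    have h1 := ((h0.comp_tendsto ht).const_mul_left ((r : ℂ) ^ M)).trans hpow
    refine h1.congr' ?_ EventuallyEq.rfl
    filter_upwards [hsmall] with z hz
    have h2 : aeval z F = ∑ l ∈ Finset.range M, (r : ℂ) ^ l * z ^ 2 ^ l := by
      simp [hF]
    rw [h2, gapSeries_eq_sum_add hr hz M, add_sub_cancel_left]
    rfl
  have hE : ∀ z, auxFun r c z = z ^ M * aeval z G
      + ∑ i, ∑ j, (c i j : ℂ) * z ^ (i : ℕ) * (gapSeries r z ^ (j : ℕ) - aeval z F ^ (j : ℕ)) := by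
    intro z
    have := congrArg (aeval z) hG
    simp only [map_sum, map_mul, map_pow, aeval_X, aeval_C, eq_ratCast, Rat.cast_intCast] at this
    rw [← this, auxFun, ← Finset.sum_add_distrib]
    refine Finset.sum_congr rfl fun i _ => ?_
    rw [← Finset.sum_add_distrib]
    refine Finset.sum_congr rfl fun j _ => ?_
    ring
  rw [funext hE]
  refine IsBigO.add ?_ ?_
  · simpa using (isBigO_refl (fun z : ℂ => z ^ M) (𝓝 0)).mul (hcont G)
  · refine IsBigO.fun_sum fun i _ => IsBigO.fun_sum fun j _ => ?_
    have h1 : (fun z : ℂ => (c i j : ℂ) * z ^ (i : ℕ)) =O[𝓝 0] (1 : ℂ → ℂ) := by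
      have : Continuous fun z : ℂ => (c i j : ℂ) * z ^ (i : ℕ) := by fun_prop
      exact this.continuousAt.isBigO_one ℂ
    simpa using h1.mul (pow_sub_pow_isBigO hf1 (hcont F) hfF j)

theorem auxFun_eventually_ne_zero {α : ℂ} (hα : ‖α‖ < 1) (hα0 : α ≠ 0) {N : ℕ}
    {c : Fin (N + 1) → Fin (N + 1) → ℤ} (hc : c ≠ 0) :
    ∀ᶠ z in 𝓝[≠] (0 : ℂ), auxFun α c z ≠ 0 := by
  have han : AnalyticAt ℂ (auxFun α c) 0 := by
    have := analyticAt_gapSeries hα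
    unfold auxFun
    fun_prop
  refine han.eventually_eq_zero_or_eventually_ne_zero.resolve_left fun h0 => hc ?_
  set P : ℂ[X][X] := ∑ i, ∑ j, C (C (c i j : ℂ) * X ^ (i : ℕ)) * X ^ (j : ℕ) with hP
  have hPe : ∀ z w, P.evalEval z w = ∑ i, ∑ j, (c i j : ℂ) * z ^ (i : ℕ) * w ^ (j : ℕ) := by
    intro z w
    simp [hP, evalEval, eval_finsetSum]
  have hP0 : P = 0 := by
    refine gapSeries_transcendental hα hα0 (P.natDegree + 1) P (Nat.lt_succ_self _) ?_
    filter_upwards [h0] with z hz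
    rw [hPe]
    exact hz
  ext i j
  have h1 : (P.coeff j).coeff i = (c i j : ℂ) := by
    simp only [hP, finsetSum_coeff, coeff_C_mul, coeff_X_pow, Fin.val_inj, mul_ite, mul_one,
      mul_zero, Finset.sum_ite_eq, Finset.mem_univ, if_true]
  rw [hP0] at h1
  simpa using h1.symm

/-! ### Specialisation at the points `α ^ (2 ^ k)` -/

/-- The integer polynomial in `x` obtained from `P(α ^ (2 ^ k), u)`, with `α = a / b`, by replacing
`u = f(α ^ (2 ^ k))` by `α ^ (-k) * (x - ∑_{l < k} α ^ (l + 2 ^ l))` and multiplying by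
`(a ^ k * b ^ (k + 2 ^ k)) ^ N * (b ^ (2 ^ k)) ^ N` to clear denominators. Its value at
`x = f(α)` is given by `aeval_specPoly`. -/
noncomputable def specPoly (a b : ℕ) {N : ℕ} (c : Fin (N + 1) → Fin (N + 1) → ℤ) (k : ℕ) : ℤ[X] :=
  ∑ i, ∑ j, C (c i j * (a : ℤ) ^ (2 ^ k * (i : ℕ)) * (b : ℤ) ^ (2 ^ k * (N - (i : ℕ)))) *
    (C ((b : ℤ) ^ k * (b : ℤ) ^ (k + 2 ^ k)) * X
      - C ((b : ℤ) ^ k *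
        ∑ l ∈ Finset.range k, (a : ℤ) ^ (l + 2 ^ l) * (b : ℤ) ^ (k + 2 ^ k - (l + 2 ^ l)))) ^ (j : ℕ)
    * C ((a : ℤ) ^ k * (b : ℤ) ^ (k + 2 ^ k)) ^ (N - (j : ℕ))

theorem natDegree_specPoly_le (a b : ℕ) {N : ℕ} (c : Fin (N + 1) → Fin (N + 1) → ℤ) (k : ℕ) :
    (specPoly a b c k).natDegree ≤ N := by
  refine natDegree_sum_le_of_forall_le _ _ fun i _ =>
    natDegree_sum_le_of_forall_le _ _ fun j _ => ?_
  rw [← C_pow]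
  refine (natDegree_mul_C_le _ _).trans ((natDegree_C_mul_le _ _).trans ?_)
  refine natDegree_pow_le.trans ?_
  rw [natDegree_sub_C]
  have h1 : (C ((b : ℤ) ^ k * (b : ℤ) ^ (k + 2 ^ k)) * X).natDegree ≤ 1 :=
    natDegree_C_mul_le _ _ |>.trans natDegree_X_le
  have h2 : (j : ℕ) ≤ N := Nat.lt_succ_iff.1 j.2
  nlinarith

theorem aeval_specPoly {a b : ℕ} (hb : 0 < b) (hab : a < b) {N : ℕ}
    (c : Fin (N + 1) → Fin (N + 1) → ℤ) (k : ℕ) :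
    aeval (gapSeries (a / b) (a / b)) (specPoly a b c k)
      = ((a : ℂ) ^ k * (b : ℂ) ^ (k + 2 ^ k)) ^ N * ((b : ℂ) ^ 2 ^ k) ^ N
        * auxFun (a / b) c ((a / b : ℂ) ^ 2 ^ k) := by
  have hb0 : (b : ℂ) ≠ 0 := by exact_mod_cast hb.ne'
  have hα : ‖(a / b : ℂ)‖ < 1 := by
    rw [norm_div, Complex.norm_natCast, Complex.norm_natCast, div_lt_one (by positivity)]
    exact_mod_cast hab
  set α : ℂ := a / b with hαdef
  set β := gapSeries α α with hβ
  set u := gapSeries α (α ^ 2 ^ k) with hu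
  have hβu : β = ∑ l ∈ Finset.range k, α ^ l * α ^ 2 ^ l + α ^ k * u :=
    gapSeries_eq_sum_add hα hα.le k
  have ha : (a : ℂ) = b * α := by rw [hαdef]; field_simp
  -- the functional equation iterated `k` times, with denominators cleared
  have hlin : (b : ℂ) ^ k * (b : ℂ) ^ (k + 2 ^ k) * β - (b : ℂ) ^ k *
        ∑ l ∈ Finset.range k, (a : ℂ) ^ (l + 2 ^ l) * (b : ℂ) ^ (k + 2 ^ k - (l + 2 ^ l))
      = (a : ℂ) ^ k * (b : ℂ) ^ (k + 2 ^ k) * u := by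
    have hs : ∑ l ∈ Finset.range k, (a : ℂ) ^ (l + 2 ^ l) * (b : ℂ) ^ (k + 2 ^ k - (l + 2 ^ l))
        = (b : ℂ) ^ (k + 2 ^ k) * ∑ l ∈ Finset.range k, α ^ l * α ^ 2 ^ l := by
      rw [Finset.mul_sum]
      refine Finset.sum_congr rfl fun l hl => ?_
      have hl' : l ≤ k := (Finset.mem_range.1 hl).le
      have h2 : 2 ^ l ≤ 2 ^ k := Nat.pow_le_pow_right two_pos hl'
      rw [← pow_add, ha, mul_pow, mul_right_comm, ← pow_add]
      congr 2
      omega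
    rw [hs, hβu, ha, mul_pow]
    ring
  rw [specPoly, auxFun, Finset.mul_sum (Finset.univ : Finset (Fin (N + 1))),
    map_sum (aeval β)]
  refine Finset.sum_congr rfl fun i _ => ?_
  rw [Finset.mul_sum (Finset.univ : Finset (Fin (N + 1))),
    map_sum (aeval β)]
  refine Finset.sum_congr rfl fun j _ => ?_
  have hi : (i : ℕ) ≤ N := Nat.lt_succ_iff.1 i.2
  have hj : (j : ℕ) ≤ N := Nat.lt_succ_iff.1 j.2
  simp only [map_mul, map_sub, map_pow, map_sum, aeval_X, eq_intCast, map_intCast,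
    map_natCast]
  rw [hlin, ← hu, pow_mul, pow_mul]
  generalize (a : ℂ) ^ k * (b : ℂ) ^ (k + 2 ^ k) = V
  rw [show (a : ℂ) ^ 2 ^ k = b ^ 2 ^ k * α ^ 2 ^ k by rw [ha, mul_pow]]
  generalize (b : ℂ) ^ 2 ^ k = B
  rw [mul_pow, mul_pow]
  have h1 : V ^ N = V ^ (j : ℕ) * V ^ (N - j) := by rw [← pow_add, Nat.add_sub_cancel' hj]
  have h2 : B ^ N = B ^ (i : ℕ) * B ^ (N - i) := by rw [← pow_add, Nat.add_sub_cancel' hi]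
  rw [h1, h2]
  ring

theorem norm_aeval_specPoly_le {a b : ℕ} (hb : 2 ≤ b) (hab : a < b) {N : ℕ}
    (c : Fin (N + 1) → Fin (N + 1) → ℤ) (k R : ℕ) {z : ℂ} (hz : ‖z‖ ≤ R) :
    ‖aeval z (specPoly a b c k)‖
      ≤ (∑ i, ∑ j, ‖(c i j : ℂ)‖) * (b : ℝ) ^ (N * R) * ((b : ℝ) ^ (5 * N)) ^ 2 ^ k := by
  have hb1 : (1 : ℝ) ≤ b := by exact_mod_cast (by omega : 1 ≤ b)
  have hab' : (a : ℝ) ≤ b := by exact_mod_cast hab.le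
  have hk : k ≤ 2 ^ k := Nat.lt_two_pow_self.le
  set Y : ℝ := (b : ℝ) ^ (3 * k + 2 ^ k + R) with hY
  have hRk : ((R + k : ℕ) : ℝ) ≤ (b : ℝ) ^ (R + k) := by
    have : R + k ≤ b ^ (R + k) := (Nat.lt_pow_self (by omega)).le
    exact_mod_cast this
  have hlin : ‖(b : ℂ) ^ k * (b : ℂ) ^ (k + 2 ^ k) * z - (b : ℂ) ^ k *
        ∑ l ∈ Finset.range k, (a : ℂ) ^ (l + 2 ^ l) * (b : ℂ) ^ (k + 2 ^ k - (l + 2 ^ l))‖ ≤ Y := by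
    have hs : ‖∑ l ∈ Finset.range k, (a : ℂ) ^ (l + 2 ^ l) * (b : ℂ) ^ (k + 2 ^ k - (l + 2 ^ l))‖
        ≤ k * (b : ℝ) ^ (k + 2 ^ k) := by
      refine (norm_sum_le_of_le _ (f := fun l => (a : ℂ) ^ (l + 2 ^ l) *
        (b : ℂ) ^ (k + 2 ^ k - (l + 2 ^ l))) (n := fun _ => (b : ℝ) ^ (k + 2 ^ k)) ?_).trans_eq ?_
      · intro l hl
        have hl' : l ≤ k := (Finset.mem_range.1 hl).le
        have h2 : 2 ^ l ≤ 2 ^ k := Nat.pow_le_pow_right two_pos hl'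
        rw [norm_mul, norm_pow, norm_pow, Complex.norm_natCast, Complex.norm_natCast]
        calc (a : ℝ) ^ (l + 2 ^ l) * (b : ℝ) ^ (k + 2 ^ k - (l + 2 ^ l))
            ≤ (b : ℝ) ^ (l + 2 ^ l) * (b : ℝ) ^ (k + 2 ^ k - (l + 2 ^ l)) := by gcongr
          _ = (b : ℝ) ^ (k + 2 ^ k) := by
            rw [← pow_add]; congr 1; omega
      · simp
    calc _ ≤ ‖(b : ℂ) ^ k * (b : ℂ) ^ (k + 2 ^ k) * z‖ + ‖(b : ℂ) ^ k *
        ∑ l ∈ Finset.range k, (a : ℂ) ^ (l + 2 ^ l) * (b : ℂ) ^ (k + 2 ^ k - (l + 2 ^ l))‖ :=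
          norm_sub_le _ _
      _ ≤ (b : ℝ) ^ k * (b : ℝ) ^ (k + 2 ^ k) * R
          + (b : ℝ) ^ k * (k * (b : ℝ) ^ (k + 2 ^ k)) := by
        rw [norm_mul, norm_mul, norm_mul, norm_pow, norm_pow, Complex.norm_natCast]
        gcongr
      _ = (b : ℝ) ^ k * (b : ℝ) ^ (k + 2 ^ k) * ((R + k : ℕ) : ℝ) := by push_cast; ring
      _ ≤ (b : ℝ) ^ k * (b : ℝ) ^ (k + 2 ^ k) * (b : ℝ) ^ (R + k) := by gcongr
      _ = Y := by rw [hY, ← pow_add, ← pow_add]; congr 1; ring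
  have hV : ‖(a : ℂ) ^ k * (b : ℂ) ^ (k + 2 ^ k)‖ ≤ Y := by
    rw [norm_mul, norm_pow, norm_pow, Complex.norm_natCast, Complex.norm_natCast]
    calc (a : ℝ) ^ k * (b : ℝ) ^ (k + 2 ^ k) ≤ (b : ℝ) ^ k * (b : ℝ) ^ (k + 2 ^ k) := by gcongr
      _ = (b : ℝ) ^ (k + (k + 2 ^ k)) := by rw [← pow_add]
      _ ≤ Y := pow_le_pow_right₀ hb1 (by omega)
  have hexp : ((b : ℝ) ^ 2 ^ k) ^ N * Y ^ N ≤ (b : ℝ) ^ (N * R) * ((b : ℝ) ^ (5 * N)) ^ 2 ^ k := by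
    rw [hY, ← mul_pow, ← pow_add, ← pow_mul, ← pow_mul, ← pow_add]
    refine pow_le_pow_right₀ hb1 ?_
    nlinarith [Nat.mul_le_mul_left N hk]
  rw [specPoly, map_sum, mul_assoc, Finset.sum_mul]
  refine norm_sum_le_of_le _ fun i _ => ?_
  rw [map_sum, Finset.sum_mul]
  refine norm_sum_le_of_le _ fun j _ => ?_
  have hi : (i : ℕ) ≤ N := Nat.lt_succ_iff.1 i.2
  have hj : (j : ℕ) ≤ N := Nat.lt_succ_iff.1 j.2
  simp only [map_mul, map_sub, map_pow, map_sum, aeval_X, eq_intCast, map_intCast,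
    map_natCast]
  refine le_trans ?_ (mul_le_mul_of_nonneg_left hexp (norm_nonneg _))
  rw [norm_mul, norm_mul, norm_mul, norm_mul, norm_pow _ (j : ℕ), norm_pow _ (N - (j : ℕ)),
    norm_pow, norm_pow, Complex.norm_natCast, Complex.norm_natCast]
  have h1 : (a : ℝ) ^ (2 ^ k * (i : ℕ)) * (b : ℝ) ^ (2 ^ k * (N - i)) ≤ ((b : ℝ) ^ 2 ^ k) ^ N := by
    calc _ ≤ (b : ℝ) ^ (2 ^ k * (i : ℕ)) * (b : ℝ) ^ (2 ^ k * (N - i)) := by gcongr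
      _ = ((b : ℝ) ^ 2 ^ k) ^ N := by
        rw [← pow_add, ← pow_mul, ← Nat.mul_add, Nat.add_sub_cancel' hi]
  have hY0 : 0 ≤ Y := by positivity
  have h2 : Y ^ N = Y ^ (j : ℕ) * Y ^ (N - j) := by rw [← pow_add, Nat.add_sub_cancel' hj]
  rw [h2, mul_assoc ‖(c i j : ℂ)‖, mul_assoc ‖(c i j : ℂ)‖, mul_assoc ‖(c i j : ℂ)‖,
    mul_assoc ((a : ℝ) ^ _ * _)]
  gcongr

/-! ### Conclusion -/

theorem transcendental_gapSeries {a b : ℕ} (ha : 0 < a) (hab : a < b) :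
    Transcendental ℚ (gapSeries (a / b) (a / b)) := by
  intro hβ
  have hb : 2 ≤ b := by omega
  have hb1 : (1 : ℝ) ≤ b := by exact_mod_cast (by omega : 1 ≤ b)
  have hab' : (a : ℝ) ≤ b := by exact_mod_cast hab.le
  obtain ⟨q, d, R, hq, hL⟩ := one_le_norm_aeval_mul hβ
  set α : ℂ := a / b with hαdef
  have hαn : ‖α‖ = (a : ℝ) / b := by
    rw [hαdef, norm_div, Complex.norm_natCast, Complex.norm_natCast]
  have hα : ‖α‖ < 1 := by
    rw [hαn, div_lt_one (by positivity)]
    exact_mod_cast hab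
  have hα0 : α ≠ 0 := by
    rw [← norm_pos_iff, hαn]; positivity
  have hαr : α = ((a / b : ℚ) : ℂ) := by rw [hαdef]; push_cast; rfl
  -- `N` is chosen so large that the vanishing order `N ^ 2` beats the arithmetic losses,
  -- which are exponential in `N * 2 ^ k` only
  obtain ⟨N, hN⟩ : ∃ N : ℕ, ((b : ℝ) ^ (5 * (d + 1)) * ‖α‖ ^ N) ^ N < 1 := by
    have ht : Tendsto (fun N : ℕ => (b : ℝ) ^ (5 * (d + 1)) * ‖α‖ ^ N) atTop (𝓝 0) := by
      simpa using (tendsto_pow_atTop_nhds_zero_of_lt_one (norm_nonneg α) hα).const_mul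
        ((b : ℝ) ^ (5 * (d + 1)))
    obtain ⟨N, h1, h2⟩ := ((ht.eventually_lt_const one_pos).and (eventually_ne_atTop 0)).exists
    exact ⟨N, pow_lt_one₀ (by positivity) h1 h2⟩
  obtain ⟨c, hc0, hcO⟩ := exists_auxFun_isBigO (r := (a / b : ℚ)) (by rwa [← hαr]) N
  rw [← hαr] at hcO
  have htend : Tendsto (fun k : ℕ => α ^ 2 ^ k) atTop (𝓝[≠] 0) := by
    refine tendsto_nhdsWithin_iff.2 ⟨?_, Eventually.of_forall fun k => pow_ne_zero _ hα0⟩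
    exact (tendsto_pow_atTop_nhds_zero_of_norm_lt_one hα).comp
      (tendsto_pow_atTop_atTop_of_one_lt one_lt_two)
  obtain ⟨C₃, hC₃, hO⟩ := hcO.exists_pos
  have hO' := htend.eventually ((hO.bound).filter_mono nhdsWithin_le_nhds)
  have hne := htend.eventually (auxFun_eventually_ne_zero hα hα0 hc0)
  set C₁ : ℝ := (∑ i, ∑ j, ‖(c i j : ℂ)‖) * (b : ℝ) ^ (N * R) with hC₁
  set ρ : ℝ := ((b : ℝ) ^ (5 * (d + 1)) * ‖α‖ ^ N) ^ N with hρ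
  have hlim : Tendsto (fun k : ℕ => C₃ * ((q : ℝ) ^ N) ^ (d + 1) * C₁ ^ d * ρ ^ 2 ^ k)
      atTop (𝓝 0) := by
    have : Tendsto (fun k : ℕ => ρ ^ 2 ^ k) atTop (𝓝 0) :=
      (tendsto_pow_atTop_nhds_zero_of_lt_one (by positivity) hN).comp
        (tendsto_pow_atTop_atTop_of_one_lt one_lt_two)
    simpa using this.const_mul (C₃ * ((q : ℝ) ^ N) ^ (d + 1) * C₁ ^ d)
  obtain ⟨k, hk1, hk2, hk3⟩ := ((hlim.eventually_lt_const one_pos).and (hO'.and hne)).exists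
  have hval := aeval_specPoly (by omega : 0 < b) hab c k
  rw [← hαdef] at hval
  have hval0 : aeval (gapSeries α α) (specPoly a b c k) ≠ 0 := by
    have hac : (a : ℂ) ≠ 0 := by exact_mod_cast ha.ne'
    have hbc : (b : ℂ) ≠ 0 := by exact_mod_cast (by omega : b ≠ 0)
    rw [hval]
    exact mul_ne_zero (by positivity) hk3
  have hk : k ≤ 2 ^ k := Nat.lt_two_pow_self.le
  have hup : ‖aeval (gapSeries α α) (specPoly a b c k)‖
      ≤ ((b : ℝ) ^ (5 * N)) ^ 2 ^ k * (C₃ * (‖α‖ ^ N ^ 2) ^ 2 ^ k) := by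
    rw [hval, norm_mul]
    refine mul_le_mul ?_ (hk2.trans_eq ?_) (norm_nonneg _) (by positivity)
    · simp only [norm_mul, norm_pow, Complex.norm_natCast]
      calc ((a : ℝ) ^ k * (b : ℝ) ^ (k + 2 ^ k)) ^ N * ((b : ℝ) ^ 2 ^ k) ^ N
          ≤ ((b : ℝ) ^ k * (b : ℝ) ^ (k + 2 ^ k)) ^ N * ((b : ℝ) ^ 2 ^ k) ^ N := by gcongr
        _ = (b : ℝ) ^ ((k + (k + 2 ^ k) + 2 ^ k) * N) := by
          rw [← pow_add, ← mul_pow, ← pow_add, ← pow_mul]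
        _ ≤ (b : ℝ) ^ (5 * N * 2 ^ k) := by
          refine pow_le_pow_right₀ hb1 ?_
          nlinarith [Nat.mul_le_mul_left N hk]
        _ = _ := by rw [pow_mul]
    · rw [norm_pow, norm_pow, ← pow_mul, ← pow_mul, mul_comm (2 ^ k)]
  have h1 := hL (specPoly a b c k) N (C₁ * ((b : ℝ) ^ (5 * N)) ^ 2 ^ k)
    (natDegree_specPoly_le a b c k)
    (fun z hz => norm_aeval_specPoly_le hb hab c k R hz) hval0
  refine absurd hk1 (not_lt.2 (h1.trans ?_))
  calc _ ≤ ((b : ℝ) ^ (5 * N)) ^ 2 ^ k * (C₃ * (‖α‖ ^ N ^ 2) ^ 2 ^ k) * ((q : ℝ) ^ N) ^ (d + 1)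
        * (C₁ * ((b : ℝ) ^ (5 * N)) ^ 2 ^ k) ^ d := by gcongr
    _ = _ := by
      rw [hρ]
      generalize 2 ^ k = e
      rw [mul_pow C₁]
      simp only [mul_pow, ← pow_mul]
      ring

/-- For every integer `p ≥ 2` the real number
`(4p³ + 3p² + 2p − 1)/(8p³) + (1/(8p²(p−1)))·Σ_{k=1}^∞ ((p−1)/p)^{k + 2^{k−1}}`
is transcendental over `ℚ`.  The sum over `k ≥ 1` is written as a `tsum` over `k : ℕ`
of the term at `k + 1`. -/
theorem stmt_9 (p : ℕ) (hp : 2 ≤ p) :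
    Transcendental ℚ
      ((4 * (p : ℝ) ^ 3 + 3 * (p : ℝ) ^ 2 + 2 * (p : ℝ) - 1) / (8 * (p : ℝ) ^ 3)
        + (1 / (8 * (p : ℝ) ^ 2 * ((p : ℝ) - 1)))
          * (∑' k : ℕ, (((p : ℝ) - 1) / p) ^ ((k + 1) + 2 ^ ((k + 1) - 1)))) := by
  obtain ⟨a, rfl⟩ : ∃ a, p = a + 1 := ⟨p - 1, by omega⟩
  have ha : 0 < a := by omega
  have hsum : ((∑' k : ℕ, ((((a + 1 : ℕ) : ℝ) - 1) / (a + 1 : ℕ)) ^ ((k + 1) + 2 ^ ((k + 1) - 1)) : ℝ)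
      : ℂ) = (a / (a + 1 : ℕ) : ℂ) * gapSeries (a / (a + 1 : ℕ)) (a / (a + 1 : ℕ)) := by
    rw [gapSeries, ← tsum_mul_left, Complex.ofReal_tsum]
    congr 1
    ext k
    push_cast
    rw [add_sub_cancel_right]
    ring
  set x : ℝ := ∑' k : ℕ, ((((a + 1 : ℕ) : ℝ) - 1) / (a + 1 : ℕ)) ^ ((k + 1) + 2 ^ ((k + 1) - 1))
  intro h
  have hap : (a : ℂ) ≠ 0 := by exact_mod_cast ha.ne'
  have hap1 : (a : ℂ) + 1 ≠ 0 := by exact_mod_cast a.succ_ne_zero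
  refine transcendental_gapSeries ha (Nat.lt_succ_self a) ?_
  have h' := h.algebraMap (A := ℂ)
  have hn : ∀ r : ℚ, IsAlgebraic ℚ (r : ℂ) := fun r => isAlgebraic_algebraMap r
  -- solving the target expression for `f(α)` by rational operations
  set p : ℚ := ((a + 1 : ℕ) : ℚ) with hp'
  have key := ((h'.sub (hn ((4 * p ^ 3 + 3 * p ^ 2 + 2 * p - 1) / (8 * p ^ 3)))).mul
    (hn (8 * p ^ 2 * (p - 1)))).mul (hn (p / a))
  refine Eq.mp (congrArg (IsAlgebraic ℚ) ?_) key
  have hx : gapSeries (a / (a + 1 : ℕ)) (a / (a + 1 : ℕ)) = (x : ℂ) * ((a + 1 : ℕ) / a : ℂ) := by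
    rw [hsum]; push_cast; field_simp
  rw [Nat.succ_eq_add_one, hx, hp']
  simp only [Complex.coe_algebraMap]
  push_cast
  rw [add_sub_cancel_left, add_sub_cancel_right]
  field_simp
end
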